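/- arXiv:2106.15256 — 7 statements merged into one kernel-verified Lean document; each statement's English description precedes it below -/
import Mathlib

section
/- Let b ∈ ℕ⁺ and let φ be an instance of cubic monotone one-in-three 3-SAT. If φ has a one-in-three model, then the union U_{τ_PT^b}(φ) has the τ_PT^b-ESSP and the τ_PT^b-SSP. -/
namespace PNS

/-- Events of a (b-bounded) type of nets: either a pair `(m,n)` or a group element `z ∈ {0,…,b}`. -/
inductive BEvent : Type
  | pair : ℕ → ℕ → BEvent
  | num : ℕ → BEvent
  deriving DecidableEq

/-- A type of nets `τ = (S_τ, E_τ, δ_τ)` with `S_τ ⊆ ℕ`. -/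
structure NetType : Type where
  states : Set ℕ
  events : Set BEvent
  delta : ℕ → BEvent → Option ℕ

def deltaPT (b : ℕ) : ℕ → BEvent → Option ℕ
  | s, .pair m n => if m ≤ s ∧ s - m + n ≤ b then some (s - m + n) else none
  | _, .num _ => none

def deltaZPT (b : ℕ) : ℕ → BEvent → Option ℕ
  | s, .pair m n => if m ≤ s ∧ s - m + n ≤ b then some (s - m + n) else none
  | s, .num z => some ((s + z) % (b + 1))

def deltaRZPT (b : ℕ) : ℕ → BEvent → Option ℕ
  | s, .pair m n => if s = m ∧ n ≤ b then some n else none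
  | s, .num z => some ((s + z) % (b + 1))

/-- The type of `b`-bounded P/T-nets. -/
def tauPT (b : ℕ) : NetType :=
  ⟨{s | s ≤ b}, {e | ∃ m n, e = BEvent.pair m n ∧ m ≤ b ∧ n ≤ b}, deltaPT b⟩

/-- The type of pure `b`-bounded P/T-nets. -/
def tauPPT (b : ℕ) : NetType :=
  ⟨{s | s ≤ b}, {e | ∃ m n, e = BEvent.pair m n ∧ m ≤ b ∧ n ≤ b ∧ (m = 0 ∨ n = 0)}, deltaPT b⟩

/-- The type of `ℤ_{b+1}`-extended `b`-bounded P/T-nets. -/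
def tauZPT (b : ℕ) : NetType :=
  ⟨{s | s ≤ b},
   {e | (∃ m n, e = BEvent.pair m n ∧ m ≤ b ∧ n ≤ b ∧ ¬(m = 0 ∧ n = 0)) ∨
        (∃ z, e = BEvent.num z ∧ z ≤ b)}, deltaZPT b⟩

/-- The type of pure `ℤ_{b+1}`-extended `b`-bounded P/T-nets. -/
def tauZPPT (b : ℕ) : NetType :=
  ⟨{s | s ≤ b},
   {e | (∃ m n, e = BEvent.pair m n ∧ m ≤ b ∧ n ≤ b ∧ ¬(m = 0 ∧ n = 0) ∧ (m = 0 ∨ n = 0)) ∨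
        (∃ z, e = BEvent.num z ∧ z ≤ b)}, deltaZPT b⟩

/-- The type of restricted `ℤ_{b+1}`-extended `b`-bounded P/T-nets. -/
def tauRZPT (b : ℕ) : NetType :=
  ⟨{s | s ≤ b},
   {e | (∃ m n, e = BEvent.pair m n ∧ m ≤ b ∧ n ≤ b ∧ ¬(m = 0 ∧ n = 0)) ∨
        (∃ z, e = BEvent.num z ∧ z ≤ b)}, deltaRZPT b⟩

/-- A (deterministic, initialized) transition system with states `S`, events `E`. -/
structure TS (S E : Type) : Type where
  delta : S → E → Option S
  init : S

def TS.Reachable {S E : Type} (A : TS S E) (s : S) : Prop :=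
  Relation.ReflTransGen (fun x y => ∃ e, A.delta x e = some y) A.init s

/-- Every state is reachable from the initial state. -/
def TS.Initialized {S E : Type} (A : TS S E) : Prop :=
  ∀ s, A.Reachable s

/-- A `τ`-region `(sup, sig)` of a TS `A`. -/
structure IsRegion (τ : NetType) {S E : Type} (A : TS S E)
    (sup : S → ℕ) (sig : E → BEvent) : Prop where
  sup_mem : ∀ s, sup s ∈ τ.states
  sig_mem : ∀ e, sig e ∈ τ.events
  edge : ∀ s e s', A.delta s e = some s' → τ.delta (sup s) (sig e) = some (sup s')

/-- `A` has the `τ`-state separation property. -/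
def HasSSP (τ : NetType) {S E : Type} (A : TS S E) : Prop :=
  ∀ s s' : S, s ≠ s' → ∃ sup sig, IsRegion τ A sup sig ∧ sup s ≠ sup s'

/-- `A` has the `τ`-event state separation property. -/
def HasESSP (τ : NetType) {S E : Type} (A : TS S E) : Prop :=
  ∀ (e : E) (s : S), A.delta s e = none →
    ∃ sup sig, IsRegion τ A sup sig ∧ τ.delta (sup s) (sig e) = none

def Solvable (τ : NetType) {S E : Type} (A : TS S E) : Prop :=
  HasESSP τ A ∧ HasSSP τ A

def sigMinus : BEvent → ℕ
  | .pair m _ => m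
  | .num _ => 0

def sigPlus : BEvent → ℕ
  | .pair _ n => n
  | .num _ => 0

def sigAbs : BEvent → ℕ
  | .pair _ _ => 0
  | .num z => z

open Classical in
/-- The linear TS `s₀ −ev 0→ s₁ −ev 1→ … −ev (m-1)→ s_m` on the `m+1` pairwise
distinct states `Fin (m+1)` with initial state `0`. -/
noncomputable def linTS {E : Type} (m : ℕ) (ev : ℕ → E) : TS (Fin (m + 1)) E where
  init := ⟨0, Nat.succ_pos m⟩
  delta s e :=
    if h : (s : ℕ) < m ∧ ev (s : ℕ) = e then some ⟨(s : ℕ) + 1, Nat.succ_lt_succ h.1⟩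
    else none

/-- The linear TS whose sequence of edge labels is the list `l`. -/
noncomputable def linOfList {E : Type} (l : List E) (d : E) : TS (Fin (l.length + 1)) E :=
  linTS l.length (fun i => l.getD i d)

/-- A `τ`-region of the union `U(A i)` of TS with pairwise disjoint state sets
(modeled by a sigma type) and shared events `E`. -/
def UnionRegion (τ : NetType) {ι : Type} {S : ι → Type} {E : Type}
    (A : ∀ i, TS (S i) E) (sup : (Σ i, S i) → ℕ) (sig : E → BEvent) : Prop :=
  (∀ s, sup s ∈ τ.states) ∧ (∀ e, sig e ∈ τ.events) ∧
    ∀ (i : ι) (s : S i) (e : E) (s' : S i),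
      (A i).delta s e = some s' → τ.delta (sup ⟨i, s⟩) (sig e) = some (sup ⟨i, s'⟩)

/-- The union has the `τ`-SSP: every SSA (pair of distinct states of the same
constituent) is solved by a `τ`-region of the union. -/
def UnionHasSSP (τ : NetType) {ι : Type} {S : ι → Type} {E : Type}
    (A : ∀ i, TS (S i) E) : Prop :=
  ∀ (i : ι) (s s' : S i), s ≠ s' →
    ∃ sup sig, UnionRegion τ A sup sig ∧ sup ⟨i, s⟩ ≠ sup ⟨i, s'⟩

/-- The union has the `τ`-ESSP: every ESSA is solved by a `τ`-region of the union. -/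
def UnionHasESSP (τ : NetType) {ι : Type} {S : ι → Type} {E : Type}
    (A : ∀ i, TS (S i) E) : Prop :=
  ∀ (e : E) (i : ι) (s : S i), (A i).delta s e = none →
    ∃ sup sig, UnionRegion τ A sup sig ∧ τ.delta (sup ⟨i, s⟩) (sig e) = none

/-- An instance of cubic monotone one-in-three 3-SAT with `m` clauses over the
`m` variables `Fin m`: the `i`-th clause is `{cl i 0, cl i 1, cl i 2}` with
`cl i 0 < cl i 1 < cl i 2`, and every variable occurs in exactly three clauses. -/
structure CMSat (m : ℕ) : Type where
  cl : Fin m → Fin 3 → Fin m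
  mono01 : ∀ i, cl i 0 < cl i 1
  mono12 : ∀ i, cl i 1 < cl i 2
  cubic : ∀ v : Fin m,
    (Finset.univ.filter (fun i => v = cl i 0 ∨ v = cl i 1 ∨ v = cl i 2)).card = 3

/-- `M` is a one-in-three model of `φ`: every clause contains exactly one variable of `M`. -/
def OneInThreeModel {m : ℕ} (φ : CMSat m) (M : Set (Fin m)) : Prop :=
  ∀ i : Fin m, ∃! j : Fin 3, φ.cl i j ∈ M

/-- Index set of the gadgets of the union `U_{τ_PT^b}(φ)`. -/
inductive PTIdx (m : ℕ) : Type
  | H : PTIdx m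
  | C : Fin 4 → PTIdx m
  | F : Fin (2 * m) → PTIdx m
  | G : Fin (2 * m) → PTIdx m
  | M : Fin m → PTIdx m
  | T : Fin m → PTIdx m

/-- Events of the union `U_{τ_PT^b}(φ)`. -/
inductive PTEv (m : ℕ) : Type
  | k : PTEv m
  | zz : PTEv m
  | o0 : PTEv m
  | o1 : PTEv m
  | kk : Fin 4 → PTEv m
  | z : Fin (2 * m) → PTEv m
  | X : Fin m → PTEv m
  deriving DecidableEq

/-- The label sequences of the linear gadgets of `U_{τ_PT^b}(φ)`. -/
def gadPT (b : ℕ) {m : ℕ} (φ : CMSat m) : PTIdx m → List (PTEv m)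
  | .H => List.replicate b .k ++ List.replicate b .zz ++ [.o0] ++ List.replicate b .k ++
      List.replicate b .zz ++ List.replicate b .o1 ++ List.replicate b .k
  | .C j => .o0 :: .kk j :: List.replicate b .o1
  | .F j => [.kk 0, .z j]
  | .G j => [.z j, .o0]
  | .M i => .kk 1 :: List.replicate b (.X i)
  | .T i => .kk 2 :: (List.replicate b (.X (φ.cl i 0)) ++
      .z ⟨2 * (i : ℕ), by have := i.isLt; omega⟩ :: (List.replicate b (.X (φ.cl i 1)) ++
      .z ⟨2 * (i : ℕ) + 1, by have := i.isLt; omega⟩ ::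
        (List.replicate b (.X (φ.cl i 2)) ++ [.kk 3])))

/-- The union `U_{τ_PT^b}(φ)` of linear gadget TS. -/
noncomputable def UPT (b : ℕ) {m : ℕ} (φ : CMSat m) :
    ∀ i : PTIdx m, TS (Fin ((gadPT b φ i).length + 1)) (PTEv m) :=
  fun i => linOfList (gadPT b φ i) PTEv.k

section aux
variable {b m : ℕ} {φ : CMSat m}

theorem gadH (n : ℕ) (e : PTEv m) : (gadPT b φ .H)[n]? = some e ↔
    (n < b ∧ e = .k) ∨ (b ≤ n ∧ n < 2*b ∧ e = .zz) ∨ (n = 2*b ∧ e = .o0) ∨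
    (2*b+1 ≤ n ∧ n < 3*b+1 ∧ e = .k) ∨ (3*b+1 ≤ n ∧ n < 4*b+1 ∧ e = .zz) ∨
    (4*b+1 ≤ n ∧ n < 5*b+1 ∧ e = .o1) ∨ (5*b+1 ≤ n ∧ n < 6*b+1 ∧ e = .k) := by
  simp only [gadPT, List.getElem?_append, List.getElem?_replicate, List.length_append,
    List.length_replicate, List.length_singleton, List.getElem?_singleton]
  split_ifs <;> simp [eq_comm] <;> grind

theorem gadC (j : Fin 4) (n : ℕ) (e : PTEv m) : (gadPT b φ (.C j))[n]? = some e ↔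
    (n = 0 ∧ e = .o0) ∨ (n = 1 ∧ e = .kk j) ∨ (2 ≤ n ∧ n < b + 2 ∧ e = .o1) := by
  rcases n with _ | _ | n <;>
  simp [gadPT, List.getElem?_replicate, eq_comm] 

theorem gadF (j : Fin (2*m)) (n : ℕ) (e : PTEv m) : (gadPT b φ (.F j))[n]? = some e ↔
    (n = 0 ∧ e = .kk 0) ∨ (n = 1 ∧ e = .z j) := by
  rcases n with _ | _ | n <;> simp [gadPT, eq_comm]

theorem gadG_s9 (j : Fin (2*m)) (n : ℕ) (e : PTEv m) : (gadPT b φ (.G j))[n]? = some e ↔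
    (n = 0 ∧ e = .z j) ∨ (n = 1 ∧ e = .o0) := by
  rcases n with _ | _ | n <;> simp [gadPT, eq_comm]

theorem gadM (i : Fin m) (n : ℕ) (e : PTEv m) : (gadPT b φ (.M i))[n]? = some e ↔
    (n = 0 ∧ e = .kk 1) ∨ (1 ≤ n ∧ n < b + 1 ∧ e = .X i) := by
  rcases n with _ | n <;> simp [gadPT, List.getElem?_replicate, eq_comm]

/-- first `z`-index of clause `i` -/
def z0 (i : Fin m) : Fin (2*m) := ⟨2 * (i : ℕ), by have := i.isLt; omega⟩
/-- second `z`-index of clause `i` -/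
def z1 (i : Fin m) : Fin (2*m) := ⟨2 * (i : ℕ) + 1, by have := i.isLt; omega⟩

theorem gadT_list (i : Fin m) : gadPT b φ (.T i) = [.kk 2] ++ List.replicate b (.X (φ.cl i 0)) ++
    [.z (z0 i)] ++ List.replicate b (.X (φ.cl i 1)) ++ [.z (z1 i)] ++
    List.replicate b (.X (φ.cl i 2)) ++ [.kk 3] := by
  simp [gadPT, z0, z1]

theorem gadT_s9 (i : Fin m) (n : ℕ) (e : PTEv m) : (gadPT b φ (.T i))[n]? = some e ↔
    (n = 0 ∧ e = .kk 2) ∨ (1 ≤ n ∧ n < b + 1 ∧ e = .X (φ.cl i 0)) ∨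
    (n = b + 1 ∧ e = .z (z0 i)) ∨
    (b + 2 ≤ n ∧ n < 2*b + 2 ∧ e = .X (φ.cl i 1)) ∨
    (n = 2*b + 2 ∧ e = .z (z1 i)) ∨
    (2*b + 3 ≤ n ∧ n < 3*b + 3 ∧ e = .X (φ.cl i 2)) ∨
    (n = 3*b + 3 ∧ e = .kk 3) := by
  rw [gadT_list]
  simp only [List.getElem?_append, List.getElem?_replicate, List.length_append,
    List.length_replicate, List.length_singleton, List.getElem?_singleton]
  split_ifs <;> simp [eq_comm] <;> grind

theorem lenH : (gadPT b φ .H).length = 6*b+1 := by simp [gadPT]; omega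
theorem lenC (j) : (gadPT b φ (.C j)).length = b+2 := by simp [gadPT]
theorem lenF (j) : (gadPT b φ (.F j)).length = 2 := by simp [gadPT]
theorem lenG (j) : (gadPT b φ (.G j)).length = 2 := by simp [gadPT]
theorem lenM (j) : (gadPT b φ (.M j)).length = b+1 := by simp [gadPT]
theorem lenT (j) : (gadPT b φ (.T j)).length = 3*b+4 := by simp [gadPT]; omega

/-- Arithmetic form of a region of the union. -/
def Good (b : ℕ) (φ : CMSat m) (sup : PTIdx m → ℕ → ℕ) (sig : PTEv m → ℕ × ℕ) : Prop :=
  (∀ i n, sup i n ≤ b) ∧ (∀ e, (sig e).1 ≤ b ∧ (sig e).2 ≤ b) ∧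
  ∀ i n e, (gadPT b φ i)[n]? = some e →
    (sig e).1 ≤ sup i n ∧ sup i (n+1) + (sig e).1 = sup i n + (sig e).2

/-- The atom `(e, n-th state of gadget i)` is solvable. -/
def Solv (b : ℕ) (φ : CMSat m) (e : PTEv m) (i : PTIdx m) (n : ℕ) : Prop :=
  ∃ sup sig, Good b φ sup sig ∧
    (sup i n < (sig e).1 ∨ b + (sig e).1 < sup i n + (sig e).2)

theorem delta_some (i : PTIdx m) (s s' : Fin ((gadPT b φ i).length + 1)) (e : PTEv m) :
    (UPT b φ i).delta s e = some s' ↔ (gadPT b φ i)[(s:ℕ)]? = some e ∧ (s':ℕ) = s + 1 := by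
  simp only [UPT, linOfList, linTS, List.getD_eq_getElem?_getD]
  split_ifs with h
  · obtain ⟨h1, h2⟩ := h
    simp only [List.getElem?_eq_getElem h1, Option.getD_some] at h2 ⊢
    simp [h2, Fin.ext_iff, eq_comm]
  · simp only [false_iff, reduceCtorEq]
    rintro ⟨h1, -⟩
    exact h ⟨(List.getElem?_eq_some_iff.1 h1).1, by simp [h1]⟩

theorem delta_none (i : PTIdx m) (s : Fin ((gadPT b φ i).length + 1)) (e : PTEv m) :
    (UPT b φ i).delta s e = none ↔ (gadPT b φ i)[(s:ℕ)]? ≠ some e := by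
  constructor
  · intro h h'
    have hl := (List.getElem?_eq_some_iff.1 h').1
    have := (delta_some (b := b) (φ := φ) i s ⟨s+1, by omega⟩ e).2 ⟨h', rfl⟩
    simp [h] at this
  · intro h
    by_contra h'
    obtain ⟨s', hs'⟩ := Option.ne_none_iff_exists'.1 h'
    exact h ((delta_some i s s' e).1 hs').1

theorem essp_of (h : ∀ e i n, n ≤ (gadPT b φ i).length → (gadPT b φ i)[n]? ≠ some e →
    Solv b φ e i n) : UnionHasESSP (tauPT b) (UPT b φ) := by
  intro e i s hs
  obtain ⟨sup, sig, ⟨h1, h2, h3⟩, hb⟩ := h e i s (by omega) ((delta_none i s e).1 hs)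
  refine ⟨fun x => sup x.1 x.2, fun e => .pair (sig e).1 (sig e).2, ⟨fun s => h1 _ _,
    fun e => ⟨_, _, rfl, h2 e⟩, ?_⟩, ?_⟩
  · intro i s e s' hd
    obtain ⟨ha, hb⟩ := (delta_some i s s' e).1 hd
    have := h3 _ _ _ ha
    have h5 := h1 i (s+1)
    simp only [tauPT, deltaPT, hb]
    rw [if_pos (by omega)]
    congr 1; omega
  · simp only [tauPT, deltaPT]
    rw [if_neg (by omega)]

theorem ssp_of_essp (h : UnionHasESSP (tauPT b) (UPT b φ)) :
    UnionHasSSP (tauPT b) (UPT b φ) := by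
  have key : ∀ (i : PTIdx m) (d : ℕ) (s s' : Fin ((gadPT b φ i).length + 1)),
      (s:ℕ) < s' → d + s' = (gadPT b φ i).length →
      ∃ sup sig, UnionRegion (tauPT b) (UPT b φ) sup sig ∧ sup ⟨i, s⟩ ≠ sup ⟨i, s'⟩ := by
    intro i d
    induction d with
    | zero =>
      intro s s' hlt hd
      have hs : (s:ℕ) < (gadPT b φ i).length := by omega
      obtain ⟨sup, sig, hr, hn⟩ := h ((gadPT b φ i)[(s:ℕ)]) i s'
        ((delta_none i s' _).2 (by rw [List.getElem?_eq_none (by omega)]; simp))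
      refine ⟨sup, sig, hr, fun he => ?_⟩
      have := hr.2.2 i s _ ⟨s+1, by omega⟩
        ((delta_some i s _ _).2 ⟨List.getElem?_eq_getElem hs, rfl⟩)
      rw [he, hn] at this
      simp at this
    | succ d ih =>
      intro s s' hlt hd
      have hs : (s:ℕ) < (gadPT b φ i).length := by omega
      have hd1 := (delta_some i s ⟨s+1, by omega⟩ _).2 ⟨List.getElem?_eq_getElem hs, rfl⟩
      by_cases hc : (UPT b φ i).delta s' ((gadPT b φ i)[(s:ℕ)]) = none
      · obtain ⟨sup, sig, hr, hn⟩ := h _ i s' hc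
        refine ⟨sup, sig, hr, fun he => ?_⟩
        have := hr.2.2 i s _ _ hd1
        rw [he, hn] at this
        simp at this
      · obtain ⟨t, ht⟩ := Option.ne_none_iff_exists'.1 hc
        have ht' := ((delta_some i s' t _).1 ht).2
        obtain ⟨sup, sig, hr, hn⟩ := ih ⟨s+1, by omega⟩ t (by simp; omega) (by omega)
        refine ⟨sup, sig, hr, fun he => hn ?_⟩
        have e1 := hr.2.2 i s _ _ hd1
        have e2 := hr.2.2 i s' _ _ ht
        rw [he, e2] at e1
        simpa using e1.symm
  intro i s s' hne
  rcases lt_or_gt_of_ne (fun h => hne (Fin.ext h) : (s:ℕ) ≠ s') with hlt | hlt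
  · exact key i _ s s' hlt (Nat.sub_add_cancel (by omega))
  · obtain ⟨sup, sig, hr, hn⟩ := key i _ s' s hlt (Nat.sub_add_cancel (by omega))
    exact ⟨sup, sig, hr, hn.symm⟩

/-- Supports given gadget by gadget. -/
def mkSup (H : ℕ → ℕ) (C : Fin 4 → ℕ → ℕ) (F G : Fin (2*m) → ℕ → ℕ) (N T : Fin m → ℕ → ℕ) :
    PTIdx m → ℕ → ℕ
  | .H => H
  | .C j => C j
  | .F j => F j
  | .G j => G j
  | .M i => N i
  | .T i => T i

/-- Signatures given event by event. -/
def mkSig (k zz o0 o1 : ℕ × ℕ) (kk : Fin 4 → ℕ × ℕ) (z : Fin (2*m) → ℕ × ℕ)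
    (X : Fin m → ℕ × ℕ) : PTEv m → ℕ × ℕ
  | .k => k
  | .zz => zz
  | .o0 => o0
  | .o1 => o1
  | .kk j => kk j
  | .z j => z j
  | .X i => X i

/-- One edge of the type. -/
def Step (s : ℕ) (p : ℕ × ℕ) (t : ℕ) : Prop := p.1 ≤ s ∧ t + p.1 = s + p.2

theorem good_mk {H : ℕ → ℕ} {C : Fin 4 → ℕ → ℕ} {F G : Fin (2*m) → ℕ → ℕ}
    {N T : Fin m → ℕ → ℕ} {k zz o0 o1 : ℕ × ℕ} {kk : Fin 4 → ℕ × ℕ} {z : Fin (2*m) → ℕ × ℕ}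
    {X : Fin m → ℕ × ℕ}
    (bH : ∀ n, H n ≤ b) (bC : ∀ j n, C j n ≤ b) (bF : ∀ j n, F j n ≤ b) (bG : ∀ j n, G j n ≤ b)
    (bN : ∀ j n, N j n ≤ b) (bT : ∀ j n, T j n ≤ b)
    (bk : (k.1 ≤ b ∧ k.2 ≤ b) ∧ (zz.1 ≤ b ∧ zz.2 ≤ b) ∧ (o0.1 ≤ b ∧ o0.2 ≤ b) ∧
      (o1.1 ≤ b ∧ o1.2 ≤ b))
    (bkk : ∀ j, (kk j).1 ≤ b ∧ (kk j).2 ≤ b) (bz : ∀ j, (z j).1 ≤ b ∧ (z j).2 ≤ b)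
    (bX : ∀ j, (X j).1 ≤ b ∧ (X j).2 ≤ b)
    (hH : ∀ n, (n < b → Step (H n) k (H (n+1))) ∧
      (b ≤ n → n < 2*b → Step (H n) zz (H (n+1))) ∧
      (n = 2*b → Step (H n) o0 (H (n+1))) ∧
      (2*b+1 ≤ n → n < 3*b+1 → Step (H n) k (H (n+1))) ∧
      (3*b+1 ≤ n → n < 4*b+1 → Step (H n) zz (H (n+1))) ∧
      (4*b+1 ≤ n → n < 5*b+1 → Step (H n) o1 (H (n+1))) ∧
      (5*b+1 ≤ n → n < 6*b+1 → Step (H n) k (H (n+1))))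
    (hC : ∀ j n, (n = 0 → Step (C j n) o0 (C j (n+1))) ∧
      (n = 1 → Step (C j n) (kk j) (C j (n+1))) ∧
      (2 ≤ n → n < b+2 → Step (C j n) o1 (C j (n+1))))
    (hF : ∀ j, Step (F j 0) (kk 0) (F j 1) ∧ Step (F j 1) (z j) (F j 2))
    (hG : ∀ j, Step (G j 0) (z j) (G j 1) ∧ Step (G j 1) o0 (G j 2))
    (hN : ∀ i n, (n = 0 → Step (N i n) (kk 1) (N i (n+1))) ∧
      (1 ≤ n → n < b+1 → Step (N i n) (X i) (N i (n+1))))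
    (hT : ∀ i n, (n = 0 → Step (T i n) (kk 2) (T i (n+1))) ∧
      (1 ≤ n → n < b+1 → Step (T i n) (X (φ.cl i 0)) (T i (n+1))) ∧
      (n = b+1 → Step (T i n) (z (z0 i)) (T i (n+1))) ∧
      (b+2 ≤ n → n < 2*b+2 → Step (T i n) (X (φ.cl i 1)) (T i (n+1))) ∧
      (n = 2*b+2 → Step (T i n) (z (z1 i)) (T i (n+1))) ∧
      (2*b+3 ≤ n → n < 3*b+3 → Step (T i n) (X (φ.cl i 2)) (T i (n+1))) ∧
      (n = 3*b+3 → Step (T i n) (kk 3) (T i (n+1)))) :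
    Good b φ (mkSup H C F G N T) (mkSig k zz o0 o1 kk z X) := by
  refine ⟨?_, ?_, ?_⟩
  · intro i n
    cases i <;> simp only [mkSup] <;> apply_assumption
  · intro e
    obtain ⟨h1, h2, h3, h4⟩ := bk
    cases e <;> simp only [mkSig] <;> apply_assumption
  · intro i n e he
    cases i with
    | H =>
      rw [gadH] at he
      obtain ⟨a1, a2, a3, a4, a5, a6, a7⟩ := hH n
      rcases he with ⟨h1, rfl⟩ | ⟨h1, h2, rfl⟩ | ⟨h1, rfl⟩ | ⟨h1, h2, rfl⟩ | ⟨h1, h2, rfl⟩ |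
        ⟨h1, h2, rfl⟩ | ⟨h1, h2, rfl⟩
      · exact a1 h1
      · exact a2 h1 h2
      · exact a3 h1
      · exact a4 h1 h2
      · exact a5 h1 h2
      · exact a6 h1 h2
      · exact a7 h1 h2
    | C j =>
      rw [gadC] at he
      obtain ⟨a1, a2, a3⟩ := hC j n
      rcases he with ⟨h1, rfl⟩ | ⟨h1, rfl⟩ | ⟨h1, h2, rfl⟩
      · exact a1 h1
      · exact a2 h1
      · exact a3 h1 h2
    | F j =>
      rw [gadF] at he
      rcases he with ⟨rfl, rfl⟩ | ⟨rfl, rfl⟩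
      · exact (hF j).1
      · exact (hF j).2
    | G j =>
      rw [gadG_s9] at he
      rcases he with ⟨rfl, rfl⟩ | ⟨rfl, rfl⟩
      · exact (hG j).1
      · exact (hG j).2
    | M i =>
      rw [gadM] at he
      rcases he with ⟨h1, rfl⟩ | ⟨h1, h2, rfl⟩
      · exact (hN i n).1 h1
      · exact (hN i n).2 h1 h2
    | T i =>
      rw [gadT_s9] at he
      obtain ⟨a1, a2, a3, a4, a5, a6, a7⟩ := hT i n
      rcases he with ⟨h1, rfl⟩ | ⟨h1, h2, rfl⟩ | ⟨h1, rfl⟩ | ⟨h1, h2, rfl⟩ | ⟨h1, rfl⟩ |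
        ⟨h1, h2, rfl⟩ | ⟨h1, rfl⟩
      · exact a1 h1
      · exact a2 h1 h2
      · exact a3 h1
      · exact a4 h1 h2
      · exact a5 h1
      · exact a6 h1 h2
      · exact a7 h1

open Classical in
theorem R0 (e : PTEv m) (i : PTIdx m) (n : ℕ) (hb : 1 ≤ b) (h : e ∉ gadPT b φ i) :
    Solv b φ e i n := by
  refine ⟨fun i _ => if e ∈ gadPT b φ i then b else 0,
    fun e' => if e' = e then (b, b) else (0, 0), ⟨?_, ?_, ?_⟩, ?_⟩
  · intro i n; dsimp only; split_ifs <;> omega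
  · intro e'; dsimp only; split_ifs <;> simp
  · intro i n e' he
    have := List.mem_of_getElem? he
    dsimp only
    by_cases h : e' = e
    · subst h; simp [this]
    · simp [h]
  · left; simp [h]; omega

set_option linter.all false
set_option linter.unusedVariables false
set_option linter.unreachableTactic false
set_option linter.unusedTactic false

set_option maxHeartbeats 2000000 in
open Classical in
/-- Region with `k` producing and `zz` consuming. -/
theorem R3 (hb : 1 ≤ b) : Good b φ
    (mkSup (fun n => if n ≤ b then n else if n ≤ 2*b then 2*b - n else if n ≤ 3*b+1 then n - (2*b+1) else if n ≤ 5*b+1 then 4*b+1-n else min (n-(5*b+1)) b)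
      (fun j n => 0)
      (fun j n => 0)
      (fun j n => 0)
      (fun i n => 0)
      (fun i n => 0))
    (mkSig (0, 1) (1, 0) (0, 0) (0, 0) (fun j => (0, 0)) (fun j => (0, 0)) (fun i => (0, 0))) := by
  apply good_mk
  all_goals intros
  all_goals try simp only [Step]
  all_goals and_intros
  all_goals intros
  all_goals try and_intros
  all_goals try split_ifs
  all_goals try dsimp only
  all_goals first
    | omega
    | grind [z0, z1]

set_option maxHeartbeats 2000000 in
open Classical in
/-- Region with `o1` consuming, `zz` testing. -/
theorem R5 (hb : 1 ≤ b) : Good b φ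
    (mkSup (fun n => if n ≤ 4*b+1 then b else 5*b+1-n)
      (fun j n => b-(n-2))
      (fun j n => 0)
      (fun j n => 0)
      (fun i n => 0)
      (fun i n => 0))
    (mkSig (0, 0) (b, b) (0, 0) (1, 0) (fun j => (0, 0)) (fun j => (0, 0)) (fun i => (0, 0))) := by
  apply good_mk
  all_goals intros
  all_goals try simp only [Step]
  all_goals and_intros
  all_goals intros
  all_goals try and_intros
  all_goals try split_ifs
  all_goals try dsimp only
  all_goals first
    | omega
    | grind [z0, z1]

set_option maxHeartbeats 2000000 in
open Classical in
/-- Region with `o0` consuming. -/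
theorem R6 (hb : 1 ≤ b) : Good b φ
    (mkSup (fun n => if n ≤ 2*b then b else 0)
      (fun j n => if n = 0 then b else 0)
      (fun j n => 0)
      (fun j n => if n ≤ 1 then b else 0)
      (fun i n => 0)
      (fun i n => 0))
    (mkSig (0, 0) (0, 0) (b, 0) (0, 0) (fun j => (0, 0)) (fun j => (0, 0)) (fun i => (0, 0))) := by
  apply good_mk
  all_goals intros
  all_goals try simp only [Step]
  all_goals and_intros
  all_goals intros
  all_goals try and_intros
  all_goals try split_ifs
  all_goals try dsimp only
  all_goals first
    | omega
    | grind [z0, z1]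

set_option maxHeartbeats 2000000 in
open Classical in
/-- Region with `zz` producing and `o0` consuming. -/
theorem R7 (hb : 1 ≤ b) : Good b φ
    (mkSup (fun n => if n ≤ 2*b then n - b else min (n-(3*b+1)) b)
      (fun j n => if n = 0 then b else 0)
      (fun j n => 0)
      (fun j n => if n ≤ 1 then b else 0)
      (fun i n => 0)
      (fun i n => 0))
    (mkSig (0, 0) (0, 1) (b, 0) (0, 0) (fun j => (0, 0)) (fun j => (0, 0)) (fun i => (0, 0))) := by
  apply good_mk
  all_goals intros
  all_goals try simp only [Step]
  all_goals and_intros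
  all_goals intros
  all_goals try and_intros
  all_goals try split_ifs
  all_goals try dsimp only
  all_goals first
    | omega
    | grind [z0, z1]

set_option maxHeartbeats 2000000 in
open Classical in
/-- Region with `z q` producing and `o0` consuming. -/
theorem R8 (hb : 1 ≤ b) (q : Fin (2*m)) : Good b φ
    (mkSup (fun n => if n ≤ 2*b then b else 0)
      (fun j n => if n = 0 then b else 0)
      (fun j n => if (j:ℕ) = q then (if n ≤ 1 then 0 else b) else 0)
      (fun j n => if (j:ℕ) = q then (if n = 1 then b else 0) else if n ≤ 1 then b else 0)
      (fun i n => 0)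
      (fun i n => if (q:ℕ) = 2*i then (if n ≤ b+1 then 0 else b) else if (q:ℕ) = 2*i+1 then (if n ≤ 2*b+2 then 0 else b) else 0))
    (mkSig (0, 0) (0, 0) (b, 0) (0, 0) (fun j => (0, 0)) (fun j => if (j:ℕ) = q then (0, b) else (0, 0)) (fun i => (0, 0))) := by
  apply good_mk
  all_goals intros
  all_goals try simp only [Step]
  all_goals and_intros
  all_goals intros
  all_goals try and_intros
  all_goals try split_ifs
  all_goals try dsimp only
  all_goals first
    | omega
    | grind [z0, z1]

set_option maxHeartbeats 2000000 in
open Classical in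
/-- Region with `o0` producing, `o1` and `kk` testing. -/
theorem R11 (hb : 1 ≤ b) : Good b φ
    (mkSup (fun n => if n ≤ 2*b then 0 else b)
      (fun j n => if n = 0 then 0 else b)
      (fun j n => b)
      (fun j n => if n ≤ 1 then 0 else b)
      (fun i n => b)
      (fun i n => b))
    (mkSig (0, 0) (0, 0) (0, b) (b, b) (fun j => (b, b)) (fun j => (0, 0)) (fun i => (0, 0))) := by
  apply good_mk
  all_goals intros
  all_goals try simp only [Step]
  all_goals and_intros
  all_goals intros
  all_goals try and_intros
  all_goals try split_ifs
  all_goals try dsimp only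
  all_goals first
    | omega
    | grind [z0, z1]

set_option maxHeartbeats 2000000 in
open Classical in
/-- Region with `zz` producing, `k` consuming, `o1` testing. -/
theorem R12 (hb : 1 ≤ b) : Good b φ
    (mkSup (fun n => if n ≤ b then b-n else if n ≤ 2*b then n-b else if n ≤ 3*b+1 then 3*b+1-n else if n ≤ 5*b+1 then min (n-(3*b+1)) b else 6*b+1-n)
      (fun j n => b)
      (fun j n => 0)
      (fun j n => 0)
      (fun i n => 0)
      (fun i n => 0))
    (mkSig (1, 0) (0, 1) (0, 0) (b, b) (fun j => (0, 0)) (fun j => (0, 0)) (fun i => (0, 0))) := by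
  apply good_mk
  all_goals intros
  all_goals try simp only [Step]
  all_goals and_intros
  all_goals intros
  all_goals try and_intros
  all_goals try split_ifs
  all_goals try dsimp only
  all_goals first
    | omega
    | grind [z0, z1]

set_option maxHeartbeats 2000000 in
open Classical in
/-- Region with `kk q` producing. -/
theorem R13 (hb : 1 ≤ b) (q : Fin 4) : Good b φ
    (mkSup (fun n => b)
      (fun j n => if (j:ℕ) = q ∧ n ≤ 1 then 0 else b)
      (fun j n => if (q:ℕ) = 0 ∧ n = 0 then 0 else b)
      (fun j n => b)
      (fun i n => if (q:ℕ) = 1 ∧ n = 0 then 0 else b)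
      (fun i n => if ((q:ℕ) = 2 ∧ n = 0) ∨ ((q:ℕ) = 3 ∧ n ≤ 3*b+3) then 0 else b))
    (mkSig (0, 0) (0, 0) (0, 0) (b, b) (fun j => if (j:ℕ) = q then (0, b) else (0, 0)) (fun j => if (q:ℕ) = 3 then (0, 0) else (b, b)) (fun i => if (q:ℕ) = 3 then (0, 0) else (b, b))) := by
  apply good_mk
  all_goals intros
  all_goals try simp only [Step]
  all_goals and_intros
  all_goals intros
  all_goals try and_intros
  all_goals try split_ifs
  all_goals try dsimp only
  all_goals first
    | omega
    | grind [z0, z1]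

set_option maxHeartbeats 2000000 in
open Classical in
/-- Region with `X v` producing, and `kk 3` and the `z j` with `P j` testing. -/
theorem R15 (hb : 1 ≤ b) (v : Fin m) (P : Fin (2*m) → Prop)
    (h0 : ∀ i, P (z0 i) → v = φ.cl i 0) (h1 : ∀ i, P (z1 i) → v = φ.cl i 1) : Good b φ
    (mkSup (fun n => 0)
      (fun j n => b)
      (fun j n => b)
      (fun j n => b)
      (fun i n => if i = v then min (n-1) b else 0)
      (fun i n => if φ.cl i 0 = v then min (n-1) b else if φ.cl i 1 = v then min (n-(b+2)) b else
        if φ.cl i 2 = v then min (n-(2*b+3)) b else b))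
    (mkSig (0, 0) (0, 0) (0, 0) (0, 0) (fun j => if (j:ℕ) = 3 then (b, b) else (0, 0)) (fun j => if P j then (b, b) else (0, 0)) (fun i => if i = v then (0, 1) else (0, 0))) := by
  have d1 : ∀ i, φ.cl i 0 ≠ φ.cl i 1 := fun i => (φ.mono01 i).ne
  have d2 : ∀ i, φ.cl i 1 ≠ φ.cl i 2 := fun i => (φ.mono12 i).ne
  have d3 : ∀ i, φ.cl i 0 ≠ φ.cl i 2 := fun i => ((φ.mono01 i).trans (φ.mono12 i)).ne
  apply good_mk
  all_goals intros
  all_goals try simp only [Step]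
  all_goals and_intros
  all_goals intros
  all_goals try and_intros
  all_goals try split_ifs
  all_goals try dsimp only
  all_goals first
    | omega
    | grind [z0, z1]

set_option maxHeartbeats 2000000 in
open Classical in
/-- Region with `z q` producing, and the `X v` with `Q v` testing. -/
theorem R16 (hb : 1 ≤ b) (q : Fin (2*m)) (Q : Fin m → Prop)
    (h0 : ∀ i : Fin m, (q:ℕ) = 2*i → ¬ Q (φ.cl i 0))
    (h1 : ∀ i : Fin m, (q:ℕ) = 2*i+1 → ¬ Q (φ.cl i 0) ∧ ¬ Q (φ.cl i 1)) : Good b φ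
    (mkSup (fun n => 0)
      (fun j n => 0)
      (fun j n => if (j:ℕ) = q then (if n ≤ 1 then 0 else b) else 0)
      (fun j n => if (j:ℕ) = q then (if n = 0 then 0 else b) else 0)
      (fun i n => b)
      (fun i n => if (q:ℕ) = 2*i then (if n ≤ b+1 then 0 else b) else if (q:ℕ) = 2*i+1 then (if n ≤ 2*b+2 then 0 else b) else b))
    (mkSig (0, 0) (0, 0) (0, 0) (0, 0) (fun j => (0, 0)) (fun j => if (j:ℕ) = q then (0, b) else (0, 0)) (fun i => if Q i then (b, b) else (0, 0))) := by
  apply good_mk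
  all_goals intros
  all_goals try simp only [Step]
  all_goals and_intros
  all_goals intros
  all_goals try and_intros
  all_goals try split_ifs
  all_goals try dsimp only
  all_goals first
    | omega
    | grind [z0, z1]

theorem model_cases {M : Set (Fin m)} (hM : OneInThreeModel φ M) (i : Fin m) :
    (φ.cl i 0 ∈ M ∧ φ.cl i 1 ∉ M ∧ φ.cl i 2 ∉ M) ∨
      (φ.cl i 0 ∉ M ∧ φ.cl i 1 ∈ M ∧ φ.cl i 2 ∉ M) ∨
      (φ.cl i 0 ∉ M ∧ φ.cl i 1 ∉ M ∧ φ.cl i 2 ∈ M) := by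
  obtain ⟨j, hj, hu⟩ := hM i
  have a0 : φ.cl i 0 ∈ M → 0 = j := hu 0
  have a1 : φ.cl i 1 ∈ M → 1 = j := hu 1
  have a2 : φ.cl i 2 ∈ M → 2 = j := hu 2
  clear hu
  fin_cases j <;> simp at a0 a1 a2 hj <;> tauto

set_option maxHeartbeats 2000000 in
open Classical in
/-- Model region with `k` producing. -/
theorem R4 (hb : 1 ≤ b) {M : Set (Fin m)} (hM : OneInThreeModel φ M) : Good b φ
    (mkSup (fun n => if n ≤ 2*b then min n b else if n ≤ 4*b+1 then min (n-(2*b+1)) b else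
        if n ≤ 5*b+1 then 5*b+1-n else min (n-(5*b+1)) b)
      (fun j n => if n = 0 then b else if n = 1 then 0 else b-(n-2))
      (fun j n => if n = 0 then 0 else b)
      (fun j n => if n ≤ 1 then b else 0)
      (fun i n => if n = 0 then 0 else if i ∈ M then b-(n-1) else b)
      (fun i n => if n = 0 then 0 else if 3*b+4 ≤ n then b else
        if φ.cl i 0 ∈ M then b-(n-1) else if φ.cl i 1 ∈ M then b-(n-(b+2)) else b-(n-(2*b+3))))
    (mkSig (0, 1) (b, b) (b, 0) (1, 0) (fun j => (0, b)) (fun j => (0, 0)) (fun i => if i ∈ M then (1, 0) else (0, 0))) := by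
  have hm : ∀ i, (φ.cl i 0 ∈ M ∧ φ.cl i 1 ∉ M ∧ φ.cl i 2 ∉ M) ∨
      (φ.cl i 0 ∉ M ∧ φ.cl i 1 ∈ M ∧ φ.cl i 2 ∉ M) ∨
      (φ.cl i 0 ∉ M ∧ φ.cl i 1 ∉ M ∧ φ.cl i 2 ∈ M) := model_cases hM
  apply good_mk
  all_goals intros
  all_goals try simp only [Step]
  all_goals and_intros
  all_goals intros
  all_goals try and_intros
  all_goals try split_ifs
  all_goals try dsimp only
  all_goals first
    | omega
    | grind [z0, z1]

set_option maxHeartbeats 2000000 in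
open Classical in
/-- Model region with `k` testing. -/
theorem R2 (hb : 1 ≤ b) {M : Set (Fin m)} (hM : OneInThreeModel φ M) : Good b φ
    (mkSup (fun n => if n ≤ b then b else if n ≤ 2*b then 2*b-n else if n ≤ 3*b+1 then b else
        if n ≤ 4*b+1 then 4*b+1-n else min (n-(4*b+1)) b)
      (fun j n => if n = 0 then 0 else if n = 1 then b else min (n-2) b)
      (fun j n => if n = 0 then b else 0)
      (fun j n => if n ≤ 1 then 0 else b)
      (fun i n => if n = 0 then b else if i ∈ M then min (n-1) b else 0)
      (fun i n => if n = 0 then b else if 3*b+4 ≤ n then 0 else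
        if φ.cl i 0 ∈ M then min (n-1) b else if φ.cl i 1 ∈ M then min (n-(b+2)) b else min (n-(2*b+3)) b))
    (mkSig (b, b) (1, 0) (0, b) (0, 1) (fun j => (b, 0)) (fun j => (0, 0)) (fun i => if i ∈ M then (0, 1) else (0, 0))) := by
  have hm : ∀ i, (φ.cl i 0 ∈ M ∧ φ.cl i 1 ∉ M ∧ φ.cl i 2 ∉ M) ∨
      (φ.cl i 0 ∉ M ∧ φ.cl i 1 ∈ M ∧ φ.cl i 2 ∉ M) ∨
      (φ.cl i 0 ∉ M ∧ φ.cl i 1 ∉ M ∧ φ.cl i 2 ∈ M) := model_cases hM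
  apply good_mk
  all_goals intros
  all_goals try simp only [Step]
  all_goals and_intros
  all_goals intros
  all_goals try and_intros
  all_goals try split_ifs
  all_goals try dsimp only
  all_goals first
    | omega
    | grind [z0, z1]

theorem solv_k (hb : 1 ≤ b) {M : Set (Fin m)} (hM : OneInThreeModel φ M) (i : PTIdx m) (n : ℕ)
    (hn : n ≤ (gadPT b φ i).length) (h : (gadPT b φ i)[n]? ≠ some .k) : Solv b φ .k i n := by
  cases i with
  | H =>
    rw [lenH] at hn
    rw [Ne, gadH] at h
    simp only [and_true, reduceCtorEq, and_false, or_false, false_or] at h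
    by_cases hc : n = b ∨ n = 3*b+1 ∨ n = 6*b+1
    · refine ⟨_, _, R3 hb, Or.inr ?_⟩
      simp only [mkSup, mkSig]
      split_ifs <;> omega
    · refine ⟨_, _, R2 hb hM, Or.inl ?_⟩
      simp only [mkSup, mkSig]
      split_ifs <;> omega
  | _ => exact R0 _ _ _ hb (by simp [gadPT])

theorem solv_zz (hb : 1 ≤ b) {M : Set (Fin m)} (hM : OneInThreeModel φ M) (i : PTIdx m) (n : ℕ)
    (hn : n ≤ (gadPT b φ i).length) (h : (gadPT b φ i)[n]? ≠ some .zz) : Solv b φ .zz i n := by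
  cases i with
  | H =>
    rw [lenH] at hn
    rw [Ne, gadH] at h
    simp only [and_true, reduceCtorEq, and_false, or_false, false_or] at h
    by_cases hc : n = 2*b ∨ n = 2*b+1 ∨ n = 4*b+1
    · refine ⟨_, _, R3 hb, Or.inl ?_⟩
      simp only [mkSup, mkSig]
      split_ifs <;> omega
    · by_cases hc : 4*b+2 ≤ n
      · refine ⟨_, _, R5 hb, Or.inl ?_⟩
        simp only [mkSup, mkSig]
        split_ifs <;> omega
      · refine ⟨_, _, R4 hb hM, Or.inl ?_⟩
        simp only [mkSup, mkSig]
        split_ifs <;> omega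
  | _ => exact R0 _ _ _ hb (by simp [gadPT])

theorem solv_o0 (hb : 1 ≤ b) (i : PTIdx m) (n : ℕ)
    (hn : n ≤ (gadPT b φ i).length) (h : (gadPT b φ i)[n]? ≠ some .o0) : Solv b φ .o0 i n := by
  cases i with
  | H =>
    rw [lenH] at hn
    rw [Ne, gadH] at h
    simp only [and_true, reduceCtorEq, and_false, or_false, false_or] at h
    by_cases hc : n < 2*b
    · refine ⟨_, _, R7 hb, Or.inl ?_⟩
      simp only [mkSup, mkSig]
      split_ifs <;> omega
    · refine ⟨_, _, R6 hb, Or.inl ?_⟩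
      simp only [mkSup, mkSig]
      split_ifs <;> omega
  | C j =>
    rw [Ne, gadC] at h
    simp only [and_true, reduceCtorEq, and_false, or_false, false_or] at h
    refine ⟨_, _, R6 hb, Or.inl ?_⟩
    simp only [mkSup, mkSig]
    split_ifs <;> omega
  | G j =>
    rw [Ne, gadG_s9] at h
    simp only [and_true, reduceCtorEq, and_false, or_false, false_or] at h
    refine ⟨_, _, R8 hb j, Or.inl ?_⟩
    simp only [mkSup, mkSig]
    split_ifs <;> omega
  | _ => exact R0 _ _ _ hb (by simp [gadPT])

theorem solv_o1 (hb : 1 ≤ b) {M : Set (Fin m)} (hM : OneInThreeModel φ M) (i : PTIdx m) (n : ℕ)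
    (hn : n ≤ (gadPT b φ i).length) (h : (gadPT b φ i)[n]? ≠ some .o1) : Solv b φ .o1 i n := by
  cases i with
  | H =>
    rw [lenH] at hn
    rw [Ne, gadH] at h
    simp only [and_true, reduceCtorEq, and_false, or_false, false_or] at h
    by_cases hc : n ≤ 2*b
    · refine ⟨_, _, R11 hb, Or.inl ?_⟩
      simp only [mkSup, mkSig]
      split_ifs; omega
    by_cases hc : n = 2*b+1
    · refine ⟨_, _, R2 hb hM, Or.inr ?_⟩
      simp only [mkSup, mkSig]
      split_ifs <;> omega
    by_cases hc : n ≤ 4*b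
    · refine ⟨_, _, R12 hb, Or.inl ?_⟩
      simp only [mkSup, mkSig]
      split_ifs <;> omega
    · refine ⟨_, _, R5 hb, Or.inl ?_⟩
      simp only [mkSup, mkSig]
      split_ifs <;> omega
  | C j =>
    rw [lenC] at hn
    rw [Ne, gadC] at h
    simp only [and_true, reduceCtorEq, and_false, or_false, false_or] at h
    by_cases hc : n ≤ 1
    · refine ⟨_, _, R13 hb j, Or.inl ?_⟩
      simp only [mkSup, mkSig]
      simp [hc]; omega
    · refine ⟨_, _, R5 hb, Or.inl ?_⟩
      simp only [mkSup, mkSig]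
      omega
  | _ => exact R0 _ _ _ hb (by simp [gadPT])

theorem solv_kk (hb : 1 ≤ b) (q : Fin 4) (i : PTIdx m) (n : ℕ)
    (hn : n ≤ (gadPT b φ i).length) (h : (gadPT b φ i)[n]? ≠ some (.kk q)) :
    Solv b φ (.kk q) i n := by
  by_cases hmem : PTEv.kk q ∈ gadPT b φ i
  swap
  · exact R0 _ _ _ hb hmem
  cases i with
  | H => simp [gadPT] at hmem
  | G j => simp [gadPT] at hmem
  | C j =>
    have hq : q = j := by simpa [gadPT] using hmem
    subst hq
    rw [Ne, gadC] at h
    simp only [and_true, reduceCtorEq, and_false, or_false, false_or] at h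
    by_cases hc : n = 0
    · refine ⟨_, _, R11 hb, Or.inl ?_⟩
      simp only [mkSup, mkSig]
      split_ifs; omega
    · refine ⟨_, _, R13 hb q, Or.inr ?_⟩
      simp only [mkSup, mkSig]
      split_ifs <;> dsimp only <;> omega
  | F j =>
    have hq : q = 0 := by simpa [gadPT] using hmem
    subst hq
    rw [Ne, gadF] at h
    simp only [and_true, reduceCtorEq, and_false, or_false, false_or] at h
    refine ⟨_, _, R13 hb 0, Or.inr ?_⟩
    simp only [mkSup, mkSig]
    simp [h]; omega
  | M j =>
    have hq : q = 1 := by simpa [gadPT] using hmem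
    subst hq
    rw [Ne, gadM] at h
    simp only [and_true, reduceCtorEq, and_false, or_false, false_or] at h
    refine ⟨_, _, R13 hb 1, Or.inr ?_⟩
    simp only [mkSup, mkSig]
    simp [h]; omega
  | T j =>
    have hq : q = 2 ∨ q = 3 := by simpa [gadPT] using hmem
    rw [lenT] at hn
    rw [Ne, gadT_s9] at h
    rcases hq with rfl | rfl
    · have hn0 : n ≠ 0 := fun h0 => h (Or.inl ⟨h0, rfl⟩)
      refine ⟨_, _, R13 hb 2, Or.inr ?_⟩
      simp only [mkSup, mkSig]
      simp [hn0]; omega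
    · have hn0 : n ≠ 3*b+3 := fun h0 => h (by simp [h0])
      by_cases hc : n = 3*b+4
      · refine ⟨_, _, R13 hb 3, Or.inr ?_⟩
        simp only [mkSup, mkSig]
        simp [hc]; omega
      · have d2 := (φ.mono12 j).ne
        have d3 := ((φ.mono01 j).trans (φ.mono12 j)).ne
        refine ⟨_, _, R15 hb (φ.cl j 2) (fun _ => False) (by simp) (by simp), Or.inl ?_⟩
        simp only [mkSup, mkSig, d2, d3]
        simp; omega

theorem solv_z (hb : 1 ≤ b) (q : Fin (2*m)) (i : PTIdx m) (n : ℕ)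
    (hn : n ≤ (gadPT b φ i).length) (h : (gadPT b φ i)[n]? ≠ some (.z q)) :
    Solv b φ (.z q) i n := by
  by_cases hmem : PTEv.z q ∈ gadPT b φ i
  swap
  · exact R0 _ _ _ hb hmem
  cases i with
  | H => simp [gadPT] at hmem
  | C j => simp [gadPT] at hmem
  | M j => simp [gadPT] at hmem
  | F j =>
    have hq : q = j := by simpa [gadPT] using hmem
    subst hq
    rw [lenF] at hn
    rw [Ne, gadF] at h
    simp only [and_true, reduceCtorEq, and_false, or_false, false_or] at h
    by_cases hc : n = 0
    · refine ⟨_, _, R13 hb 0, Or.inl ?_⟩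
      simp only [mkSup, mkSig]
      simp [hc]; omega
    · refine ⟨_, _, R16 hb q (fun _ => False) (by simp) (by simp), Or.inr ?_⟩
      simp only [mkSup, mkSig]
      split_ifs <;> dsimp only <;> omega
  | G j =>
    have hq : q = j := by simpa [gadPT] using hmem
    subst hq
    rw [Ne, gadG_s9] at h
    simp only [and_true, reduceCtorEq, and_false, or_false, false_or] at h
    refine ⟨_, _, R16 hb q (fun _ => False) (by simp) (by simp), Or.inr ?_⟩
    simp only [mkSup, mkSig]
    split_ifs <;> dsimp only <;> omega
  | T j =>
    have hq : q = z0 j ∨ q = z1 j := by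
      rw [gadT_list] at hmem
      simpa using hmem
    have d1 := (φ.mono01 j).ne
    rw [lenT] at hn
    rw [Ne, gadT_s9] at h
    rcases hq with rfl | rfl
    · have hn0 : n ≠ b+1 := fun h0 => h (by simp [h0])
      by_cases hc : n ≤ b
      · refine ⟨_, _, R15 hb (φ.cl j 0) (fun x => x = z0 j) ?_ ?_, Or.inl ?_⟩
        · intro i hi
          have : i = j := by simp only [z0, Fin.mk.injEq] at hi; omega
          rw [this]
        · intro i hi
          simp only [z0, z1, Fin.mk.injEq] at hi; omega
        · simp only [mkSup, mkSig]
          simp; omega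
      · refine ⟨_, _, R16 hb (z0 j) (fun _ => False) (by simp) (by simp), Or.inr ?_⟩
        simp only [mkSup, mkSig, z0]
        simp
        split_ifs <;> omega
    · have hn0 : n ≠ 2*b+2 := fun h0 => h (by simp [h0])
      by_cases hc : n ≤ 2*b+1
      · refine ⟨_, _, R15 hb (φ.cl j 1) (fun x => x = z1 j) ?_ ?_, Or.inl ?_⟩
        · intro i hi
          simp only [z0, z1, Fin.mk.injEq] at hi; omega
        · intro i hi
          have : i = j := by simp only [z1, Fin.mk.injEq] at hi; omega
          rw [this]
        · simp only [mkSup, mkSig, d1]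
          simp; omega
      · refine ⟨_, _, R16 hb (z1 j) (fun _ => False) (by simp) (by simp), Or.inr ?_⟩
        simp only [mkSup, mkSig, z1]
        split_ifs <;> dsimp only <;> omega

theorem solv_X (hb : 1 ≤ b) (v : Fin m) (i : PTIdx m) (n : ℕ)
    (hn : n ≤ (gadPT b φ i).length) (h : (gadPT b φ i)[n]? ≠ some (.X v)) :
    Solv b φ (.X v) i n := by
  by_cases hmem : PTEv.X v ∈ gadPT b φ i
  swap
  · exact R0 _ _ _ hb hmem
  cases i with
  | H => simp [gadPT] at hmem
  | C j => simp [gadPT] at hmem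
  | F j => simp [gadPT] at hmem
  | G j => simp [gadPT] at hmem
  | M j =>
    have hq : v = j := by
      have : b ≠ 0 := by omega
      simpa [gadPT, this] using hmem
    subst hq
    rw [lenM] at hn
    rw [Ne, gadM] at h
    simp only [and_true, reduceCtorEq, and_false, or_false, false_or] at h
    by_cases hc : n = 0
    · refine ⟨_, _, R13 hb 1, Or.inl ?_⟩
      simp only [mkSup, mkSig]
      simp [hc]; omega
    · refine ⟨_, _, R15 hb v (fun _ => False) (by simp) (by simp), Or.inr ?_⟩
      simp only [mkSup, mkSig]
      simp; omega
  | T j =>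
    have d1 := (φ.mono01 j).ne
    have d2 := (φ.mono12 j).ne
    have d3 := ((φ.mono01 j).trans (φ.mono12 j)).ne
    have hq : v = φ.cl j 0 ∨ v = φ.cl j 1 ∨ v = φ.cl j 2 := by
      have : b ≠ 0 := by omega
      simpa [gadPT, this] using hmem
    rw [lenT] at hn
    rw [Ne, gadT_s9] at h
    rcases hq with rfl | rfl | rfl
    · simp [d1, d2, d3] at h
      by_cases hc : n = 0
      · refine ⟨_, _, R13 hb 2, Or.inl ?_⟩
        simp only [mkSup, mkSig]
        simp [hc]; omega
      · refine ⟨_, _, R15 hb (φ.cl j 0) (fun _ => False) (by simp) (by simp), Or.inr ?_⟩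
        simp only [mkSup, mkSig]
        simp; omega
    · simp [d1, d1.symm, d2, d3] at h
      by_cases hc : n ≤ b+1
      · refine ⟨_, _, R16 hb (z0 j) (fun x => x = φ.cl j 1) ?_ ?_, Or.inl ?_⟩
        · intro i hi
          have : i = j := by simp only [z0] at hi; omega
          rw [this]; exact d1
        · intro i hi
          simp only [z0] at hi; omega
        · simp only [mkSup, mkSig, z0]
          simp [hc]; omega
      · refine ⟨_, _, R15 hb (φ.cl j 1) (fun _ => False) (by simp) (by simp), Or.inr ?_⟩
        simp only [mkSup, mkSig, d1]
        simp; omega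
    · simp [d2.symm, d3.symm] at h
      by_cases hc : n ≤ 2*b+2
      · refine ⟨_, _, R16 hb (z1 j) (fun x => x = φ.cl j 2) ?_ ?_, Or.inl ?_⟩
        · intro i hi
          simp only [z1] at hi; omega
        · intro i hi
          have : i = j := by simp only [z1] at hi; omega
          rw [this]; exact ⟨d3, d2⟩
        · simp only [mkSup, mkSig, z1]
          have : ¬ (2 * (j:ℕ) + 1 = 2 * j) := by omega
          simp [hc, this]; omega
      · refine ⟨_, _, R15 hb (φ.cl j 2) (fun _ => False) (by simp) (by simp), Or.inr ?_⟩
        simp only [mkSup, mkSig, d2, d3]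
        simp; omega

end aux

/-- If the cubic monotone one-in-three 3-SAT instance `φ` has a
one-in-three model, then the union `U_{τ_PT^b}(φ)` has the `τ_PT^b`-ESSP and the
`τ_PT^b`-SSP. -/
theorem stmt9 (b : ℕ) (hb : 1 ≤ b) {m : ℕ} (φ : CMSat m)
    (M : Set (Fin m)) (hM : OneInThreeModel φ M) :
    UnionHasESSP (tauPT b) (UPT b φ) ∧ UnionHasSSP (tauPT b) (UPT b φ) := by
  have h : UnionHasESSP (tauPT b) (UPT b φ) := by
    refine essp_of fun e i n hn h => ?_
    cases e with
    | k => exact solv_k hb hM i n hn h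
    | zz => exact solv_zz hb hM i n hn h
    | o0 => exact solv_o0 hb i n hn h
    | o1 => exact solv_o1 hb hM i n hn h
    | kk q => exact solv_kk hb q i n hn h
    | z q => exact solv_z hb q i n hn h
    | X v => exact solv_X hb v i n hn h
  exact ⟨h, ssp_of_essp h⟩

end PNS
end

section
/- Let b ≥ 2 be an integer, τ ∈ {τ_ZPT^b, τ_ZPPT^b}, and let φ be an instance of cubic monotone one-in-three 3-SAT. If the union U_Z(φ) has the τ-ESSP, then φ has a one-in-three model. -/
namespace PNS

/-- Index set of the gadgets of the union `U_Z(φ)`. -/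
inductive ZIdx (m : ℕ) : Type
  | H : ZIdx m
  | F : Fin m → ZIdx m
  | G : Fin m → ZIdx m
  | T : Fin m → ZIdx m

/-- Events of the union `U_Z(φ)`. -/
inductive ZEv (m : ℕ) : Type
  | k : ZEv m
  | u : ZEv m
  | zz : ZEv m
  | v : Fin m → ZEv m
  | X : Fin m → ZEv m
  deriving DecidableEq

/-- The gadget `H₃`: states `h_{3,0,0}, …, h_{3,0,b}` (`Sum.inl`) and
`h_{3,1,0}, …, h_{3,1,b-1}` (`Sum.inr`), with edges
`h_{3,0,0} −k^b→ h_{3,0,b}`, `h_{3,0,0} −u→ h_{3,1,0} −k^{b-1}→ h_{3,1,b-1} −z→ h_{3,0,b}`. -/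
def H3 (b m : ℕ) : TS ((Fin (b + 1)) ⊕ (Fin b)) (ZEv m) where
  init := Sum.inl ⟨0, Nat.succ_pos b⟩
  delta s e :=
    match s, e with
    | Sum.inl i, ZEv.k =>
        if h : (i : ℕ) < b then some (Sum.inl ⟨(i : ℕ) + 1, Nat.succ_lt_succ h⟩) else none
    | Sum.inl i, ZEv.u =>
        if h : (i : ℕ) = 0 ∧ 0 < b then some (Sum.inr ⟨0, h.2⟩) else none
    | Sum.inr i, ZEv.k =>
        if h : (i : ℕ) + 1 < b then some (Sum.inr ⟨(i : ℕ) + 1, h⟩) else none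
    | Sum.inr i, ZEv.zz =>
        if (i : ℕ) = b - 1 then some (Sum.inl ⟨b, Nat.lt_succ_self b⟩) else none
    | _, _ => none

/-- The gadget `F_j`: states `f_{j,0,0}, …, f_{j,0,b}` (`Sum.inl`) and
`f_{j,1,0}, …, f_{j,1,b-1}` (`Sum.inr`), with edges
`f_{j,0,0} −k^b→ f_{j,0,b}`, `f_{j,0,0} −v_j→ f_{j,1,0} −k^{b-1}→ f_{j,1,b-1} −X_j→ f_{j,0,b}`. -/
def Fgad (b : ℕ) {m : ℕ} (j : Fin m) : TS ((Fin (b + 1)) ⊕ (Fin b)) (ZEv m) where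
  init := Sum.inl ⟨0, Nat.succ_pos b⟩
  delta s e :=
    match s, e with
    | Sum.inl i, ZEv.k =>
        if h : (i : ℕ) < b then some (Sum.inl ⟨(i : ℕ) + 1, Nat.succ_lt_succ h⟩) else none
    | Sum.inl i, ZEv.v j' =>
        if h : (i : ℕ) = 0 ∧ 0 < b ∧ j = j' then some (Sum.inr ⟨0, h.2.1⟩) else none
    | Sum.inr i, ZEv.k =>
        if h : (i : ℕ) + 1 < b then some (Sum.inr ⟨(i : ℕ) + 1, h⟩) else none
    | Sum.inr i, ZEv.X j' =>
        if (i : ℕ) = b - 1 ∧ j = j' then some (Sum.inl ⟨b, Nat.lt_succ_self b⟩) else none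
    | _, _ => none

/-- The label sequence of the linear gadget `G_j`. -/
def gadG (b : ℕ) {m : ℕ} (j : Fin m) : List (ZEv m) :=
  List.replicate b .k ++ [.X j]

/-- The label sequence of the linear gadget `T_i`. -/
def gadT (b : ℕ) {m : ℕ} (φ : CMSat m) (i : Fin m) : List (ZEv m) :=
  List.replicate b .k ++
    [.X (φ.cl i 0), .X (φ.cl i 1), .X (φ.cl i 2), .zz] ++ List.replicate b .k

/-- The state sets of the gadgets of `U_Z(φ)`. -/
def ZSt (b : ℕ) {m : ℕ} (φ : CMSat m) : ZIdx m → Type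
  | .H => (Fin (b + 1)) ⊕ (Fin b)
  | .F _ => (Fin (b + 1)) ⊕ (Fin b)
  | .G j => Fin ((gadG b j).length + 1)
  | .T i => Fin ((gadT b φ i).length + 1)

/-- The union `U_Z(φ)`. -/
noncomputable def UZ (b : ℕ) {m : ℕ} (φ : CMSat m) : ∀ i : ZIdx m, TS (ZSt b φ i) (ZEv m)
  | .H => H3 b m
  | .F j => Fgad b j
  | .G j => linOfList (gadG b j) ZEv.k
  | .T i => linOfList (gadT b φ i) ZEv.k

/-- One step of a pair event. -/
lemma step_pair {b x p q y : ℕ} (h : deltaZPT b x (.pair p q) = some y) :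
    p ≤ x ∧ y + p = x + q ∧ y ≤ b := by
  simp only [deltaZPT] at h
  split_ifs at h with h1
  simp only [Option.some.injEq] at h
  omega

lemma step_num {b x z y : ℕ} (h : deltaZPT b x (.num z) = some y) :
    y = (x + z) % (b + 1) := by
  simp only [deltaZPT, Option.some.injEq] at h
  exact h.symm

lemma chain_pair {b p q c : ℕ} (f : ℕ → ℕ)
    (h : ∀ i < c, deltaZPT b (f i) (.pair p q) = some (f (i + 1))) :
    ∀ i ≤ c, f i + i * p = f 0 + i * q := by
  intro i
  induction i with
  | zero => simp
  | succ n ih =>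
    intro hn
    have h1 := ih (by omega)
    have h2 := step_pair (h n (by omega))
    rw [add_mul, add_mul]
    omega

/-- Edges of a linear gadget, with the supports as a function on `ℕ`. -/
lemma lin_edges {b : ℕ} {E : Type} (l : List E) (d : E) (sup : Fin (l.length + 1) → ℕ)
    (sig : E → BEvent) (hS : ∀ s, sup s ≤ b)
    (h : ∀ s e s', (linOfList l d).delta s e = some s' →
      deltaZPT b (sup s) (sig e) = some (sup s')) :
    ∃ f : ℕ → ℕ, f 0 ≤ b ∧ ∀ n < l.length, deltaZPT b (f n) (sig (l.getD n d)) = some (f (n + 1)) := by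
  refine ⟨fun n => if hn : n < l.length + 1 then sup ⟨n, hn⟩ else 0, ?_, ?_⟩
  · simpa using hS 0
  intro n hn
  have h1 : n < l.length + 1 := by omega
  have h2 : n + 1 < l.length + 1 := by omega
  simp only [h1, h2, dif_pos]
  apply h
  simp [linOfList, linTS, hn]

/-- Edges of a two-row gadget (`H₃` or `F_j`). -/
lemma two_row {b : ℕ} {m : ℕ} (hb : 2 ≤ b) (A : TS ((Fin (b + 1)) ⊕ (Fin b)) (ZEv m))
    (x : ZEv m)
    (h0 : ∀ i (h : i < b), A.delta (Sum.inl ⟨i, by omega⟩) .k = some (Sum.inl ⟨i + 1, by omega⟩))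
    (h1 : ∀ i (h : i + 1 < b), A.delta (Sum.inr ⟨i, by omega⟩) .k = some (Sum.inr ⟨i + 1, by omega⟩))
    (h2 : A.delta (Sum.inr ⟨b - 1, by omega⟩) x = some (Sum.inl ⟨b, by omega⟩))
    (sup : (Fin (b + 1)) ⊕ (Fin b) → ℕ) (sig : ZEv m → BEvent)
    (h : ∀ s e s', A.delta s e = some s' → deltaZPT b (sup s) (sig e) = some (sup s')) :
    ∃ f g : ℕ → ℕ, (∀ i < b, deltaZPT b (f i) (sig .k) = some (f (i + 1))) ∧
      (∀ i < b - 1, deltaZPT b (g i) (sig .k) = some (g (i + 1))) ∧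
      deltaZPT b (g (b - 1)) (sig x) = some (f b) ∧
      g (b - 1) = sup (Sum.inr ⟨b - 1, by omega⟩) ∧ g 0 = sup (Sum.inr ⟨0, by omega⟩) ∧
      f 0 = sup (Sum.inl ⟨0, by omega⟩) := by
  refine ⟨fun n => if hn : n < b + 1 then sup (Sum.inl ⟨n, hn⟩) else 0,
    fun n => if hn : n < b then sup (Sum.inr ⟨n, hn⟩) else 0, ?_, ?_, ?_, ?_, ?_, ?_⟩
  · intro i hi
    have e1 : i < b + 1 := by omega
    simp only [e1, hi, dif_pos, Nat.add_lt_add_iff_right]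
    exact h _ _ _ (h0 i hi)
  · intro i hi
    have e1 : i < b := by omega
    have e2 : i + 1 < b := by omega
    simp only [e1, e2, dif_pos]
    exact h _ _ _ (h1 i e2)
  · have e1 : b - 1 < b := by omega
    have e2 : b < b + 1 := by omega
    simp only [e1, e2, dif_pos]
    exact h _ _ _ h2
  · have e1 : b - 1 < b := by omega
    simp only [e1, dif_pos]
  · have e1 : 0 < b := by omega
    simp only [e1, dif_pos]
  · simp

lemma h3_none (b m : ℕ) (hb : 2 ≤ b) :
    (H3 b m).delta (Sum.inr ⟨b - 1, by omega⟩) .k = none := by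
  simp only [H3]
  rw [dif_neg]
  omega

lemma none_pair {b x p q : ℕ} (h : deltaZPT b x (.pair p q) = none) :
    ¬ (p ≤ x ∧ x - p + q ≤ b) := by
  intro hc
  simp [deltaZPT, hc] at h

/-- A chain of `b` nontrivial shifts forces unit steps. -/
lemma k_cases {b p q : ℕ} (hb : 2 ≤ b) (f : ℕ → ℕ) (hf0 : f 0 ≤ b)
    (h : ∀ i < b, deltaZPT b (f i) (.pair p q) = some (f (i + 1))) (hne : p ≠ q) :
    (p = 0 ∧ q = 1) ∨ (p = 1 ∧ q = 0) := by
  have hc := chain_pair f h b le_rfl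
  have hc1 := chain_pair f h (b - 1) (by omega)
  have hl := step_pair (h (b - 1) (by omega))
  have hs := step_pair (h 0 (by omega))
  rw [Nat.sub_add_cancel (by omega)] at hl
  rcases lt_or_gt_of_ne hne with hlt | hlt
  · left
    obtain ⟨d, rfl⟩ := Nat.exists_eq_add_of_lt hlt
    have e1 : f b = f 0 + b * (d + 1) := by nlinarith
    have e2 : d = 0 := by
      by_contra hd
      have : b * 2 ≤ b * (d + 1) := Nat.mul_le_mul_left b (by omega)
      omega
    subst e2
    omega
  · right
    obtain ⟨d, rfl⟩ := Nat.exists_eq_add_of_lt hlt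
    have e1 : f b + b * (d + 1) = f 0 := by nlinarith
    have e2 : d = 0 := by
      by_contra hd
      have : b * 2 ≤ b * (d + 1) := Nat.mul_le_mul_left b (by omega)
      omega
    subst e2
    omega

/-- Events of `τ_ZPT`. -/
def EvOK (b : ℕ) (e : BEvent) : Prop :=
  (∃ m n, e = BEvent.pair m n ∧ ¬(m = 0 ∧ n = 0)) ∨ (∃ z, e = BEvent.num z ∧ z ≤ b)

/-- An event fixing `c` and reaching the opposite bound acts trivially. -/
lemma z_up {b : ℕ} {e : BEvent} (he : EvOK b e) {x : ℕ} (hx : x ≤ b)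
    (h1 : deltaZPT b b e = some b) (h2 : deltaZPT b x e = some 0) : x = 0 := by
  rcases he with ⟨p, q, rfl, hpq⟩ | ⟨z, rfl, hz⟩
  · have := step_pair h1
    have := step_pair h2
    omega
  · have a1 := step_num h1
    have a2 := step_num h2
    have hz0 : z = 0 := by
      by_contra h0
      have : (b + z) % (b + 1) = z - 1 := by
        rw [show b + z = (z - 1) + (b + 1) by omega, Nat.add_mod_right, Nat.mod_eq_of_lt (by omega)]
      omega
    subst hz0
    rw [Nat.add_zero, Nat.mod_eq_of_lt (by omega)] at a2
    omega

lemma z_down {b : ℕ} {e : BEvent} (he : EvOK b e) {x : ℕ} (hx : x ≤ b)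
    (h1 : deltaZPT b 0 e = some 0) (h2 : deltaZPT b x e = some b) : x = b := by
  rcases he with ⟨p, q, rfl, hpq⟩ | ⟨z, rfl, hz⟩
  · have := step_pair h1
    have := step_pair h2
    omega
  · have a1 := step_num h1
    have a2 := step_num h2
    rw [Nat.zero_add, Nat.mod_eq_of_lt (by omega)] at a1
    subst a1
    rw [Nat.add_zero, Nat.mod_eq_of_lt (by omega)] at a2
    omega

lemma x_up {b : ℕ} {e : BEvent} (he : EvOK b e) {w y : ℕ} (hw : w = b ∨ w + 1 = b)
    (h1 : deltaZPT b w e = some b) (h2 : deltaZPT b b e = some y) :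
    e = .num 1 ∨ (e ≠ .num 1 ∧ ∀ x x', x ≤ b → deltaZPT b x e = some x' → x' = x) := by
  rcases he with ⟨p, q, rfl, hpq⟩ | ⟨z, rfl, hz⟩
  · right
    refine ⟨by simp, ?_⟩
    intro x x' _ hx
    have := step_pair h1
    have := step_pair h2
    have := step_pair hx
    omega
  · have a1 := step_num h1
    by_cases hz1 : z = 1
    · left; rw [hz1]
    right
    refine ⟨by simpa using hz1, ?_⟩
    have hz0 : z = 0 := by
      by_contra h0
      have : (w + z) % (b + 1) = (w + z) - (b + 1) := by
        rw [Nat.mod_eq_sub_mod (by omega), Nat.mod_eq_of_lt (by omega)]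
      omega
    subst hz0
    intro x x' hx' hx
    rw [step_num hx, Nat.add_zero, Nat.mod_eq_of_lt (by omega)]

lemma x_down {b : ℕ} (hb : 2 ≤ b) {e : BEvent} (he : EvOK b e) {w y : ℕ} (hw : w = 0 ∨ w = 1)
    (h1 : deltaZPT b w e = some 0) (h2 : deltaZPT b 0 e = some y) :
    e = .num b ∨ (e ≠ .num b ∧ ∀ x x', x ≤ b → deltaZPT b x e = some x' → x' = x) := by
  rcases he with ⟨p, q, rfl, hpq⟩ | ⟨z, rfl, hz⟩
  · right
    refine ⟨by simp, ?_⟩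
    intro x x' _ hx
    have := step_pair h1
    have := step_pair h2
    have := step_pair hx
    omega
  · have a1 := step_num h1
    by_cases hz1 : z = b
    · left; rw [hz1]
    right
    refine ⟨by simpa using hz1, ?_⟩
    have hz0 : z = 0 := by
      rw [Nat.mod_eq_of_lt (by omega)] at a1
      omega
    subst hz0
    intro x x' hx' hx
    rw [step_num hx, Nat.add_zero, Nat.mod_eq_of_lt (by omega)]

lemma num_one {b x y : ℕ} (hx : x ≤ b) (h : deltaZPT b x (.num 1) = some y) :
    (x = b ∧ y = 0) ∨ y = x + 1 := by
  have h1 := step_num h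
  rcases eq_or_ne x b with rfl | hne
  · left; rw [Nat.mod_self] at h1; exact ⟨rfl, h1⟩
  · right; rw [Nat.mod_eq_of_lt (by omega)] at h1; exact h1

lemma num_b {b x y : ℕ} (hx : x ≤ b) (h : deltaZPT b x (.num b) = some y) :
    (x = 0 ∧ y = b) ∨ y + 1 = x := by
  have h1 := step_num h
  rcases Nat.eq_zero_or_pos x with rfl | hne
  · left; rw [Nat.zero_add, Nat.mod_eq_of_lt (by omega)] at h1; exact ⟨rfl, h1⟩
  · right
    rw [show x + b = (x - 1) + (b + 1) by omega, Nat.add_mod_right, Nat.mod_eq_of_lt (by omega)] at h1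
    omega

lemma uniq3 (P : Fin 3 → Prop)
    (h : (P 0 ∧ ¬ P 1 ∧ ¬ P 2) ∨ (¬ P 0 ∧ P 1 ∧ ¬ P 2) ∨ (¬ P 0 ∧ ¬ P 1 ∧ P 2)) :
    ∃! j, P j := by
  rcases h with h | h | h
  · refine ⟨0, h.1, fun j hj => ?_⟩
    fin_cases j <;> simp_all
  · refine ⟨1, h.2.1, fun j hj => ?_⟩
    fin_cases j <;> simp_all
  · refine ⟨2, h.2.2, fun j hj => ?_⟩
    fin_cases j <;> simp_all

lemma delta_le {b x y : ℕ} {e : BEvent} (h : deltaZPT b x e = some y) : y ≤ b := by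
  cases e with
  | pair p q => exact (step_pair h).2.2
  | num z => rw [step_num h]; exact Nat.le_of_lt_succ (Nat.mod_lt _ (by omega))

lemma k_up {b c : ℕ} (f : ℕ → ℕ)
    (h : ∀ i < c, deltaZPT b (f i) (.pair 0 1) = some (f (i + 1))) : f c = f 0 + c := by
  simpa using chain_pair f h c le_rfl

lemma k_down {b c : ℕ} (f : ℕ → ℕ)
    (h : ∀ i < c, deltaZPT b (f i) (.pair 1 0) = some (f (i + 1))) : f c + c = f 0 := by
  simpa using chain_pair f h c le_rfl

/-- Let `b ≥ 2` and `τ ∈ {τ_ZPT^b, τ_ZPPT^b}`.  If the union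
`U_Z(φ)` has the `τ`-ESSP, then the cubic monotone one-in-three 3-SAT instance `φ`
has a one-in-three model. -/
theorem stmt12 (b : ℕ) (hb : 2 ≤ b) (τ : NetType) (hτ : τ = tauZPT b ∨ τ = tauZPPT b)
    {m : ℕ} (φ : CMSat m) (h : UnionHasESSP τ (UZ b φ)) :
    ∃ M : Set (Fin m), OneInThreeModel φ M := by
  obtain ⟨sup, sig, ⟨hsup, hsig, hedge⟩, hnone⟩ := h .k .H (Sum.inr ⟨b - 1, by omega⟩ : Fin (b + 1) ⊕ Fin b)
    (h3_none b m hb)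
  have hdel : τ.delta = deltaZPT b := by rcases hτ with rfl | rfl <;> rfl
  have hS : ∀ s, sup s ≤ b := by
    intro s; have := hsup s; rcases hτ with rfl | rfl <;> exact this
  have hE : ∀ e, EvOK b (sig e) := by
    intro e
    have := hsig e
    rcases hτ with rfl | rfl
    · rcases this with ⟨p, q, h1, _, _, h2⟩ | h2
      · exact Or.inl ⟨p, q, h1, h2⟩
      · exact Or.inr h2
    · rcases this with ⟨p, q, h1, _, _, h2, _⟩ | h2
      · exact Or.inl ⟨p, q, h1, h2⟩
      · exact Or.inr h2
  rw [hdel] at hnone hedge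
  clear hsup hsig h
  -- the gadget `H₃`
  obtain ⟨f, g, hf, hg, hz, hgl, hg0, hf0⟩ := two_row hb (H3 b m) .zz
    (by intro i hi; simp [H3, hi]) (by intro i hi; simp [H3, hi]) (by simp [H3])
    (fun s => sup ⟨.H, s⟩) sig (fun s e s' hh => hedge .H s e s' hh)
  have hf0' : f 0 ≤ b := by rw [hf0]; exact hS _
  have hg0' : g 0 ≤ b := by rw [hg0]; exact hS _
  have hgl' : g (b - 1) ≤ b := by rw [hgl]; exact hS _
  have hnone' : deltaZPT b (g (b - 1)) (sig .k) = none := by rw [hgl]; exact hnone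
  -- the gadgets `F_j`
  have hF : ∀ j : Fin m, ∃ f g : ℕ → ℕ, f 0 ≤ b ∧ g 0 ≤ b ∧
      (∀ i < b, deltaZPT b (f i) (sig .k) = some (f (i + 1))) ∧
      (∀ i < b - 1, deltaZPT b (g i) (sig .k) = some (g (i + 1))) ∧
      deltaZPT b (g (b - 1)) (sig (.X j)) = some (f b) := by
    intro j
    obtain ⟨f, g, hf, hg, hz, hgl, hg0, hf0⟩ := two_row hb (Fgad b j) (.X j)
      (by intro i hi; simp [Fgad, hi]) (by intro i hi; simp [Fgad, hi]) (by simp [Fgad])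
      (fun s => sup ⟨.F j, s⟩) sig (fun s e s' hh => hedge (.F j) s e s' hh)
    exact ⟨f, g, by rw [hf0]; exact hS _, by rw [hg0]; exact hS _, hf, hg, hz⟩
  -- the gadgets `G_j`
  have hG : ∀ j : Fin m, ∃ f : ℕ → ℕ, f 0 ≤ b ∧
      (∀ i < b, deltaZPT b (f i) (sig .k) = some (f (i + 1))) ∧
      deltaZPT b (f b) (sig (.X j)) = some (f (b + 1)) := by
    intro j
    obtain ⟨f, hle, hf⟩ := lin_edges (b := b) (gadG b j) ZEv.k (fun s => sup ⟨.G j, s⟩) sig (fun s => hS _)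
      (fun s e s' hh => hedge (.G j) s e s' hh)
    have hlen : (gadG b j).length = b + 1 := by simp [gadG]
    refine ⟨f, hle, ?_, ?_⟩
    · intro i hi
      have := hf i (by omega)
      have e : (gadG b j).getD i ZEv.k = ZEv.k := by
        simp [gadG, List.getD, List.getElem?_append, hi]
      rwa [e] at this
    · have := hf b (by omega)
      have e : (gadG b j).getD b ZEv.k = ZEv.X j := by
        simp [gadG, List.getD, List.getElem?_append]
      rwa [e] at this
  -- the gadgets `T_i`
  have hT : ∀ i : Fin m, ∃ f f' : ℕ → ℕ, ∃ x1 x2 x3, f 0 ≤ b ∧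
      (∀ i < b, deltaZPT b (f i) (sig .k) = some (f (i + 1))) ∧
      deltaZPT b (f b) (sig (.X (φ.cl i 0))) = some x1 ∧
      deltaZPT b x1 (sig (.X (φ.cl i 1))) = some x2 ∧
      deltaZPT b x2 (sig (.X (φ.cl i 2))) = some x3 ∧
      deltaZPT b x3 (sig .zz) = some (f' 0) ∧
      (∀ i < b, deltaZPT b (f' i) (sig .k) = some (f' (i + 1))) := by
    intro j
    obtain ⟨f, hle, hf⟩ := lin_edges (b := b) (gadT b φ j) ZEv.k (fun s => sup ⟨.T j, s⟩) sig (fun s => hS _)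
      (fun s e s' hh => hedge (.T j) s e s' hh)
    have hlen : (gadT b φ j).length = b + 4 + b := by simp [gadT]; omega
    have key : ∀ n < b + 4 + b, ∀ e, (gadT b φ j).getD n ZEv.k = e →
        deltaZPT b (f n) (sig e) = some (f (n + 1)) := by
      intro n hn e he
      have := hf n (by omega)
      rwa [he] at this
    refine ⟨f, fun n => f (b + 4 + n), f (b + 1), f (b + 2), f (b + 3), hle, ?_, ?_, ?_, ?_, ?_, ?_⟩
    · intro i hi
      apply key i (by omega)
      simp [gadT, List.getD, List.getElem?_append, hi]
    · apply key b (by omega)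
      simp [gadT, List.getD, List.getElem?_append]
    · apply key (b + 1) (by omega)
      simp [gadT, List.getD, List.getElem?_append]
    · apply key (b + 2) (by omega)
      simp [gadT, List.getD, List.getElem?_append]
    · apply key (b + 3) (by omega)
      simp [gadT, List.getD, List.getElem?_append]
    · intro i hi
      apply key (b + 4 + i) (by omega)
      have e1 : ¬ (b + 4 + i < b) := by omega
      have e2 : b + 4 + i - b = i + 4 := by omega
      simp [gadT, List.getD, List.getElem?_append, List.getElem?_replicate, e1, e2, hi]
  clear hedge hnone
  -- the signature of `k`
  rcases hE .k with ⟨p, q, hk, hpq⟩ | ⟨z, hk, _⟩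
  swap
  · rw [hk] at hnone'; simp [deltaZPT] at hnone'
  simp only [hk] at hf hg hF hG hT hnone'
  have hnn := none_pair hnone'
  have hne : p ≠ q := by
    rintro rfl
    have h0 := step_pair (hg 0 (by omega))
    have := chain_pair g hg (b - 1) le_rfl
    have : g (b - 1) = g 0 := by omega
    omega
  rcases k_cases hb f hf0' hf hne with ⟨rfl, rfl⟩ | ⟨rfl, rfl⟩
  · -- `sig k = (0,1)`
    have full : ∀ f : ℕ → ℕ, (∀ i < b, deltaZPT b (f i) (.pair 0 1) = some (f (i + 1))) →
        f 0 = 0 ∧ f b = b := by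
      intro f hf
      have h1 := k_up f hf
      have h2 := step_pair (hf (b - 1) (by omega))
      rw [Nat.sub_add_cancel (by omega)] at h2
      omega
    have hzz : deltaZPT b b (sig .zz) = some b := by
      rw [(full f hf).2] at hz
      rwa [show g (b - 1) = b by omega] at hz
    have hX : ∀ j, sig (.X j) = .num 1 ∨ (sig (.X j) ≠ .num 1 ∧
        ∀ x x', x ≤ b → deltaZPT b x (sig (.X j)) = some x' → x' = x) := by
      intro j
      obtain ⟨f, g, _, _, hf, hg, hx⟩ := hF j
      obtain ⟨f2, _, hf2, hx2⟩ := hG j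
      rw [(full f hf).2] at hx
      rw [(full f2 hf2).2] at hx2
      have h1 := k_up g hg
      have h2 := step_pair (hg (b - 1 - 1) (by omega))
      rw [Nat.sub_add_cancel (by omega)] at h2
      exact x_up (hE _) (by omega) hx hx2
    refine ⟨{j | sig (.X j) = .num 1}, fun i => uniq3 _ ?_⟩
    simp only [Set.mem_setOf_eq]
    obtain ⟨f, f', x1, x2, x3, _, hf, h1, h2, h3, h4, hf'⟩ := hT i
    rw [(full f hf).2] at h1
    rw [(full f' hf').1] at h4
    have l1 := delta_le h1
    have l2 := delta_le h2
    have l3 := delta_le h3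
    have h5 := z_up (hE _) l3 hzz h4
    have st : ∀ j x x', x ≤ b → deltaZPT b x (sig (.X j)) = some x' →
        (sig (.X j) = .num 1 ∧ ((x = b ∧ x' = 0) ∨ x' = x + 1)) ∨ (sig (.X j) ≠ .num 1 ∧ x' = x) := by
      intro j x x' hx hd
      rcases hX j with a | ⟨a, c⟩
      · rw [a] at hd
        exact Or.inl ⟨a, num_one hx hd⟩
      · exact Or.inr ⟨a, c _ _ hx hd⟩
    rcases st _ _ _ le_rfl h1 with ⟨a0, q0⟩ | ⟨a0, q0⟩ <;>
      rcases st _ _ _ l1 h2 with ⟨a1, q1⟩ | ⟨a1, q1⟩ <;>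
      rcases st _ _ _ l2 h3 with ⟨a2, q2⟩ | ⟨a2, q2⟩ <;>
      first
      | exact Or.inl ⟨a0, a1, a2⟩
      | exact Or.inr (Or.inl ⟨a0, a1, a2⟩)
      | exact Or.inr (Or.inr ⟨a0, a1, a2⟩)
      | (exfalso; omega)
  · -- `sig k = (1,0)`
    have full : ∀ f : ℕ → ℕ, f 0 ≤ b →
        (∀ i < b, deltaZPT b (f i) (.pair 1 0) = some (f (i + 1))) →
        f 0 = b ∧ f b = 0 := by
      intro f h0 hf
      have h1 := k_down f hf
      omega
    have hzz : deltaZPT b 0 (sig .zz) = some 0 := by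
      rw [(full f hf0' hf).2] at hz
      rwa [show g (b - 1) = 0 by omega] at hz
    have hX : ∀ j, sig (.X j) = .num b ∨ (sig (.X j) ≠ .num b ∧
        ∀ x x', x ≤ b → deltaZPT b x (sig (.X j)) = some x' → x' = x) := by
      intro j
      obtain ⟨f, g, f0, g0, hf, hg, hx⟩ := hF j
      obtain ⟨f2, f20, hf2, hx2⟩ := hG j
      rw [(full f f0 hf).2] at hx
      rw [(full f2 f20 hf2).2] at hx2
      have h1 := k_down g hg
      exact x_down hb (hE _) (by omega) hx hx2
    refine ⟨{j | sig (.X j) = .num b}, fun i => uniq3 _ ?_⟩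
    simp only [Set.mem_setOf_eq]
    obtain ⟨f, f', x1, x2, x3, f0, hf, h1, h2, h3, h4, hf'⟩ := hT i
    rw [(full f f0 hf).2] at h1
    rw [(full f' (delta_le h4) hf').1] at h4
    have l1 := delta_le h1
    have l2 := delta_le h2
    have l3 := delta_le h3
    have h5 := z_down (hE _) l3 hzz h4
    have st : ∀ j x x', x ≤ b → deltaZPT b x (sig (.X j)) = some x' →
        (sig (.X j) = .num b ∧ ((x = 0 ∧ x' = b) ∨ x' + 1 = x)) ∨ (sig (.X j) ≠ .num b ∧ x' = x) := by
      intro j x x' hx hd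
      rcases hX j with a | ⟨a, c⟩
      · rw [a] at hd
        exact Or.inl ⟨a, num_b hx hd⟩
      · exact Or.inr ⟨a, c _ _ hx hd⟩
    rcases st _ _ _ (Nat.zero_le b) h1 with ⟨a0, q0⟩ | ⟨a0, q0⟩ <;>
      rcases st _ _ _ l1 h2 with ⟨a1, q1⟩ | ⟨a1, q1⟩ <;>
      rcases st _ _ _ l2 h3 with ⟨a2, q2⟩ | ⟨a2, q2⟩ <;>
      first
      | exact Or.inl ⟨a0, a1, a2⟩
      | exact Or.inr (Or.inl ⟨a0, a1, a2⟩)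
      | exact Or.inr (Or.inr ⟨a0, a1, a2⟩)
      | (exfalso; omega)

end PNS
end

section
/- Let b ≥ 2 be an integer, τ ∈ {τ_ZPT^b, τ_ZPPT^b}, and let φ be an instance of cubic monotone one-in-three 3-SAT. If φ has a one-in-three model, then the union U_Z(φ) has the τ-ESSP and the τ-SSP. -/
namespace PNS

section Aux

variable {b m : ℕ} (φ : CMSat m)

/-- The (group-valued) effect of an event. -/
def shf (k z : ZMod (b + 1)) (X : Fin m → ZMod (b + 1)) : ZEv m → ZMod (b + 1)
  | .k => k
  | .u => k - z
  | .zz => z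
  | .v j => k - X j
  | .X j => X j

/-- Potential on the gadgets `H₃` and `F_j`, relative to the initial state. -/
def potC (k y : ZMod (b + 1)) : (Fin (b + 1)) ⊕ (Fin b) → ZMod (b + 1)
  | Sum.inl q => ((q : ℕ) : ZMod (b + 1)) * k
  | Sum.inr q => (k - y) + ((q : ℕ) : ZMod (b + 1)) * k

/-- Potential on the gadgets `G_j`. -/
def potG (k y : ZMod (b + 1)) (q : ℕ) : ZMod (b + 1) :=
  if q ≤ b then (q : ZMod (b + 1)) * k else (b : ZMod (b + 1)) * k + y

/-- Potential on the gadgets `T_i`. -/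
def potT (k z x0 x1 x2 : ZMod (b + 1)) (q : ℕ) : ZMod (b + 1) :=
  if q ≤ b then (q : ZMod (b + 1)) * k
  else if q = b + 1 then (b : ZMod (b + 1)) * k + x0
  else if q = b + 2 then (b : ZMod (b + 1)) * k + x0 + x1
  else if q = b + 3 then (b : ZMod (b + 1)) * k + x0 + x1 + x2
  else (b : ZMod (b + 1)) * k + x0 + x1 + x2 + z + ((q - (b + 4) : ℕ) : ZMod (b + 1)) * k

/-- Position in `G_j`. -/
def posG {φ : CMSat m} {j : Fin m} (s : ZSt b φ (.G j)) : ℕ :=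
  Fin.val (n := (gadG b j).length + 1) s

/-- Position in `T_i`. -/
def posT {φ : CMSat m} {i : Fin m} (s : ZSt b φ (.T i)) : ℕ :=
  Fin.val (n := (gadT b φ i).length + 1) s

/-- Potential on the whole union. -/
def pot (k z : ZMod (b + 1)) (X : Fin m → ZMod (b + 1)) :
    (i : ZIdx m) → ZSt b φ i → ZMod (b + 1)
  | .H, s => potC k z s
  | .F j, s => potC k (X j) s
  | .G j, s => potG k (X j) (posG s)
  | .T i, s => potT k z (X (φ.cl i 0)) (X (φ.cl i 1)) (X (φ.cl i 2)) (posT s)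

/-- Labels of `G_j`. -/
def evG (b : ℕ) (j : Fin m) (q : ℕ) : ZEv m := if q < b then .k else .X j

/-- Labels of `T_i`. -/
def evT (b : ℕ) (φ : CMSat m) (i : Fin m) (q : ℕ) : ZEv m :=
  if q < b then .k else if q = b then .X (φ.cl i 0) else if q = b + 1 then .X (φ.cl i 1)
  else if q = b + 2 then .X (φ.cl i 2) else if q = b + 3 then .zz else .k

lemma gadG_len (j : Fin m) : (gadG b j).length = b + 1 := by simp [gadG]

lemma gadT_len (i : Fin m) : (gadT b φ i).length = 2 * b + 4 := by simp [gadT]; omega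

lemma gadG_get (j : Fin m) (q : ℕ) (hq : q < b + 1) :
    (gadG b j).getD q .k = evG b j q := by
  unfold gadG evG
  by_cases h : q < b
  · rw [List.getD_append _ _ _ _ (by simpa using h)]; simp [h]
  · obtain rfl : q = b := by omega
    rw [List.getD_append_right _ _ _ _ (by simp)]; simp

lemma gadT_get (i : Fin m) (q : ℕ) :
    (gadT b φ i).getD q .k = evT b φ i q := by
  unfold gadT evT
  rw [List.append_assoc]
  by_cases h : q < b
  · rw [List.getD_append _ _ _ _ (by simpa using h)]; simp [h]
  · obtain ⟨r, rfl⟩ : ∃ r, q = b + r := ⟨q - b, by omega⟩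
    rw [List.getD_append_right _ _ _ _ (by simp)]
    rcases r with _ | _ | _ | _ | r
    · simp
    · simp
    · simp
    · simp
    · have : ¬ (b + (r + 1 + 1 + 1 + 1) < b) := by omega
      simp [List.getD_eq_getElem?_getD, List.getElem?_replicate]
      split_ifs <;> rfl

lemma lin_some {l : List (ZEv m)} {s s' : Fin (l.length + 1)} {e : ZEv m}
    (h : (linOfList l ZEv.k).delta s e = some s') :
    (s : ℕ) < l.length ∧ l.getD s .k = e ∧ (s' : ℕ) = s + 1 := by
  simp only [linOfList, linTS] at h
  split_ifs at h with h1
  · refine ⟨h1.1, h1.2, ?_⟩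
    simp at h
    rw [← h]

lemma lin_none {l : List (ZEv m)} {s : Fin (l.length + 1)} {e : ZEv m} :
    (linOfList l ZEv.k).delta s e = none ↔ ¬ ((s : ℕ) < l.length ∧ l.getD s .k = e) := by
  simp only [linOfList, linTS]
  split_ifs with h1
  · simp only [false_iff, not_not]; exact h1
  · simp only [true_iff]; exact h1

variable {φ} in
lemma G_some {j : Fin m} {s s' : ZSt b φ (.G j)} {e : ZEv m}
    (h : (UZ b φ (.G j)).delta s e = some s') :
    posG s < b + 1 ∧ evG b j (posG s) = e ∧ posG s' = posG s + 1 := by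
  obtain ⟨h1, h2, h3⟩ := lin_some (l := gadG b j) h
  have h4 : posG s < b + 1 := lt_of_lt_of_eq h1 (gadG_len j)
  exact ⟨h4, (gadG_get j _ h4).symm.trans h2, h3⟩

variable {φ} in
lemma G_src {j : Fin m} {s : ZSt b φ (.G j)} {e : ZEv m} :
    (UZ b φ (.G j)).delta s e ≠ none ↔ posG s < b + 1 ∧ evG b j (posG s) = e := by
  have h := not_iff_not.mpr (lin_none (l := gadG b j) (s := s) (e := e))
  rw [not_not] at h
  refine Iff.trans h ⟨fun h => ?_, fun h => ?_⟩
  · have h4 : posG s < b + 1 := lt_of_lt_of_eq h.1 (gadG_len j)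
    exact ⟨h4, (gadG_get j _ h4).symm.trans h.2⟩
  · exact ⟨lt_of_lt_of_eq h.1 (gadG_len j).symm, (gadG_get j _ h.1).trans h.2⟩

variable {φ} in
lemma G_le {j : Fin m} (s : ZSt b φ (.G j)) : posG s ≤ b + 1 := by
  have h1 : posG s < (gadG b j).length + 1 := Fin.isLt (n := (gadG b j).length + 1) s
  rw [gadG_len] at h1
  omega

variable {φ} in
lemma G_inj {j : Fin m} {s s' : ZSt b φ (.G j)} (h : posG s = posG s') : s = s' :=
  Fin.ext (n := (gadG b j).length + 1) h

variable {φ} in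
lemma T_some {i : Fin m} {s s' : ZSt b φ (.T i)} {e : ZEv m}
    (h : (UZ b φ (.T i)).delta s e = some s') :
    posT s < 2 * b + 4 ∧ evT b φ i (posT s) = e ∧ posT s' = posT s + 1 := by
  obtain ⟨h1, h2, h3⟩ := lin_some (l := gadT b φ i) h
  have h4 : posT s < 2 * b + 4 := lt_of_lt_of_eq h1 (gadT_len φ i)
  exact ⟨h4, (gadT_get φ i _).symm.trans h2, h3⟩

variable {φ} in
lemma T_src {i : Fin m} {s : ZSt b φ (.T i)} {e : ZEv m} :
    (UZ b φ (.T i)).delta s e ≠ none ↔ posT s < 2 * b + 4 ∧ evT b φ i (posT s) = e := by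
  have h := not_iff_not.mpr (lin_none (l := gadT b φ i) (s := s) (e := e))
  rw [not_not] at h
  refine Iff.trans h ⟨fun h => ?_, fun h => ?_⟩
  · exact ⟨lt_of_lt_of_eq h.1 (gadT_len φ i), (gadT_get φ i _).symm.trans h.2⟩
  · exact ⟨lt_of_lt_of_eq h.1 (gadT_len φ i).symm, (gadT_get φ i _).trans h.2⟩

variable {φ} in
lemma T_le {i : Fin m} (s : ZSt b φ (.T i)) : posT s ≤ 2 * b + 4 := by
  have h1 : posT s < (gadT b φ i).length + 1 := Fin.isLt (n := (gadT b φ i).length + 1) s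
  rw [gadT_len] at h1
  omega

variable {φ} in
lemma T_inj {i : Fin m} {s s' : ZSt b φ (.T i)} (h : posT s = posT s') : s = s' :=
  Fin.ext (n := (gadT b φ i).length + 1) h

lemma step_G (k z : ZMod (b + 1)) (X : Fin m → ZMod (b + 1)) (j : Fin m) (q : ℕ)
    (hq : q < b + 1) :
    potG k (X j) (q + 1) = potG k (X j) q + shf k z X (evG b j q) := by
  unfold potG evG
  by_cases h : q < b
  · simp [h, h.le, shf, Nat.succ_le_of_lt h]; ring
  · obtain rfl : q = b := by omega
    simp [shf]

lemma T_cases (b q : ℕ) : q < b ∨ q = b ∨ q = b + 1 ∨ q = b + 2 ∨ q = b + 3 ∨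
    ∃ r, q = b + 4 + r := by
  by_cases h : b + 4 ≤ q
  · right; right; right; right; right; exact ⟨q - (b + 4), by omega⟩
  · omega

lemma potT_le (k z x0 x1 x2 : ZMod (b + 1)) {q : ℕ} (h : q ≤ b) :
    potT k z x0 x1 x2 q = (q : ZMod (b + 1)) * k := by simp [potT, h]
lemma potT_1 (k z x0 x1 x2 : ZMod (b + 1)) :
    potT k z x0 x1 x2 (b + 1) = (b : ZMod (b + 1)) * k + x0 := by simp [potT]
lemma potT_2 (k z x0 x1 x2 : ZMod (b + 1)) :
    potT k z x0 x1 x2 (b + 2) = (b : ZMod (b + 1)) * k + x0 + x1 := by simp [potT]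
lemma potT_3 (k z x0 x1 x2 : ZMod (b + 1)) :
    potT k z x0 x1 x2 (b + 3) = (b : ZMod (b + 1)) * k + x0 + x1 + x2 := by simp [potT]
lemma potT_4 (k z x0 x1 x2 : ZMod (b + 1)) (r : ℕ) :
    potT k z x0 x1 x2 (b + 4 + r) =
      (b : ZMod (b + 1)) * k + x0 + x1 + x2 + z + (r : ZMod (b + 1)) * k := by
  have h1 : ¬ (b + 4 + r ≤ b) := by omega
  have h2 : ¬ (b + 4 + r = b + 1) := by omega
  have h3 : ¬ (b + 4 + r = b + 2) := by omega
  have h4 : ¬ (b + 4 + r = b + 3) := by omega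
  simp only [potT, h1, h2, h3, h4, if_false]
  congr 3; omega

lemma evT_lt (i : Fin m) {q : ℕ} (h : q < b) : evT b φ i q = .k := by simp [evT, h]
lemma evT_0 (i : Fin m) : evT b φ i b = .X (φ.cl i 0) := by simp [evT]
lemma evT_1 (i : Fin m) : evT b φ i (b + 1) = .X (φ.cl i 1) := by simp [evT]
lemma evT_2 (i : Fin m) : evT b φ i (b + 2) = .X (φ.cl i 2) := by simp [evT]
lemma evT_3 (i : Fin m) : evT b φ i (b + 3) = .zz := by simp [evT]
lemma evT_4 (i : Fin m) (r : ℕ) : evT b φ i (b + 4 + r) = .k := by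
  have h1 : ¬ (b + 4 + r < b) := by omega
  have h2 : ¬ (b + 4 + r = b + 1) := by omega
  have h3 : ¬ (b + 4 + r = b + 2) := by omega
  have h4 : ¬ (b + 4 + r = b + 3) := by omega
  have h5 : ¬ (b + 4 + r = b) := by omega
  simp only [evT, h1, h2, h3, h4, h5, if_false]

lemma step_T (k z : ZMod (b + 1)) (X : Fin m → ZMod (b + 1)) (i : Fin m) (q : ℕ) :
    potT k z (X (φ.cl i 0)) (X (φ.cl i 1)) (X (φ.cl i 2)) (q + 1) =
    potT k z (X (φ.cl i 0)) (X (φ.cl i 1)) (X (φ.cl i 2)) q + shf k z X (evT b φ i q) := by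
  rcases T_cases b q with h | rfl | rfl | rfl | rfl | ⟨r, rfl⟩
  · rw [potT_le _ _ _ _ _ h.le, potT_le _ _ _ _ _ h, evT_lt φ i h]; simp [shf]; ring
  · rw [potT_le _ _ _ _ _ le_rfl, potT_1, evT_0]; simp [shf]
  · rw [potT_1, potT_2, evT_1]; simp [shf]
  · rw [potT_2, potT_3, evT_2]; simp [shf]
  · rw [potT_3, show b + 3 + 1 = b + 4 + 0 by rfl, potT_4, evT_3]; simp [shf]
  · rw [potT_4, show b + 4 + r + 1 = b + 4 + (r + 1) by rfl, potT_4, evT_4]; simp [shf]; ring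

lemma step_H (hb : 2 ≤ b) (k z : ZMod (b + 1)) (X : Fin m → ZMod (b + 1))
    (s s' : (Fin (b + 1)) ⊕ (Fin b)) (e : ZEv m) (h : (H3 b m).delta s e = some s') :
    potC k z s' = potC k z s + shf k z X e := by
  have hbb : ((b - 1 : ℕ) : ZMod (b + 1)) = b - 1 := by
    rw [Nat.cast_sub (by omega)]; simp
  rcases s with q | q <;> cases e <;> (try simp only [H3, reduceCtorEq] at h) <;>
    (try split_ifs at h with h1) <;> (try simp only [Option.some.injEq] at h) <;>
    subst h
  · simp [potC, shf]; ring
  · replace h1 := h1.1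
    simp [potC, shf, h1]
  · simp [potC, shf]; ring
  ·
    simp only [potC, shf, h1, hbb]; ring

lemma step_F (hb : 2 ≤ b) (k z : ZMod (b + 1)) (X : Fin m → ZMod (b + 1)) (j : Fin m)
    (s s' : (Fin (b + 1)) ⊕ (Fin b)) (e : ZEv m) (h : (Fgad b j).delta s e = some s') :
    potC k (X j) s' = potC k (X j) s + shf k z X e := by
  have hbb : ((b - 1 : ℕ) : ZMod (b + 1)) = b - 1 := by
    rw [Nat.cast_sub (by omega)]; simp
  rcases s with q | q <;> cases e <;> (try simp only [Fgad, reduceCtorEq] at h) <;>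
    (try split_ifs at h with h1) <;> (try simp only [Option.some.injEq] at h) <;>
    subst h
  · simp [potC, shf]; ring
  · obtain ⟨h1, -, rfl⟩ := h1
    simp [potC, shf, h1]
  · simp [potC, shf]; ring
  · obtain ⟨h1, rfl⟩ := h1
    simp only [potC, shf, h1, hbb]; ring

lemma step_pot (hb : 2 ≤ b) (k z : ZMod (b + 1)) (X : Fin m → ZMod (b + 1)) (i : ZIdx m)
    (s : ZSt b φ i) (e : ZEv m) (s' : ZSt b φ i) (h : (UZ b φ i).delta s e = some s') :
    pot φ k z X i s' = pot φ k z X i s + shf k z X e := by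
  rcases i with _ | j | j | i
  · exact step_H hb k z X s s' e h
  · exact step_F hb k z X j s s' e h
  · obtain ⟨h1, h2, h3⟩ := G_some h
    simp only [pot]
    rw [h3, ← h2]
    exact step_G k z X j _ h1
  · obtain ⟨h1, h2, h3⟩ := T_some h
    simp only [pot]
    rw [h3, ← h2]
    exact step_T φ k z X i _

/-- What we need of the type of nets. -/
structure Good_s13 (b : ℕ) (τ : NetType) : Prop where
  st : τ.states = {s | s ≤ b}
  dl : τ.delta = deltaZPT b
  num : ∀ z, z ≤ b → BEvent.num z ∈ τ.events
  up : BEvent.pair 0 1 ∈ τ.events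
  dn : BEvent.pair b 0 ∈ τ.events

lemma good_of (hb : 2 ≤ b) {τ : NetType} (hτ : τ = tauZPT b ∨ τ = tauZPPT b) : Good_s13 b τ := by
  rcases hτ with rfl | rfl
  · refine ⟨rfl, rfl, fun z hz => Or.inr ⟨z, rfl, hz⟩, Or.inl ⟨0, 1, rfl, ?_⟩,
      Or.inl ⟨b, 0, rfl, ?_⟩⟩ <;> omega
  · refine ⟨rfl, rfl, fun z hz => Or.inr ⟨z, rfl, hz⟩, Or.inl ⟨0, 1, rfl, ?_⟩,
      Or.inl ⟨b, 0, rfl, ?_⟩⟩ <;> omega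

lemma val_le (x : ZMod (b + 1)) : x.val ≤ b := Nat.lt_succ_iff.mp (ZMod.val_lt x)

lemma val_neg_one' : ((-1 : ZMod (b + 1))).val = b := ZMod.val_neg_one b

lemma val_eq_b {x : ZMod (b + 1)} : x.val = b ↔ x = -1 := by
  constructor
  · intro h; apply ZMod.val_injective; rw [h, val_neg_one']
  · rintro rfl; exact val_neg_one'

lemma region_gen {τ : NetType} (hg : Good_s13 b τ) (hb : 2 ≤ b) (k z : ZMod (b + 1))
    (X : Fin m → ZMod (b + 1))
    (o : ZIdx m → ZMod (b + 1)) (sig : ZEv m → BEvent)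
    (hsig : ∀ e, sig e = .num (shf k z X e).val ∨
      (sig e = .pair 0 1 ∧ shf k z X e = 1 ∧
        ∀ i s, (UZ b φ i).delta s e ≠ none → o i + pot φ k z X i s ≠ -1) ∨
      (sig e = .pair b 0 ∧ shf k z X e = 1 ∧
        ∀ i s, (UZ b φ i).delta s e ≠ none → o i + pot φ k z X i s = -1)) :
    UnionRegion τ (UZ b φ) (fun p => (o p.1 + pot φ k z X p.1 p.2).val) sig := by
  refine ⟨fun s => ?_, fun e => ?_, fun i s e s' h => ?_⟩
  · rw [hg.st]; exact val_le _
  · rcases hsig e with h | ⟨h, -⟩ | ⟨h, -⟩ <;> rw [h]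
    · exact hg.num _ (val_le _)
    · exact hg.up
    · exact hg.dn
  · have hs := step_pot φ hb k z X i s e s' h
    rw [hg.dl]
    simp only
    rw [hs, ← add_assoc]
    rcases hsig e with h' | ⟨h', h1, h2⟩ | ⟨h', h1, h2⟩ <;> rw [h']
    · simp only [deltaZPT, ZMod.val_add]
    · have h3 := h2 i s (by rw [h]; simp)
      rw [h1]
      have h4 : (o i + pot φ k z X i s).val ≠ b := fun h => h3 (val_eq_b.mp h)
      have h5 := val_le (o i + pot φ k z X i s)
      have : Fact (1 < b + 1) := ⟨by omega⟩
      have h6 : (o i + pot φ k z X i s + 1).val = (o i + pot φ k z X i s).val + 1 := by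
        rw [ZMod.val_add, ZMod.val_one, Nat.mod_eq_of_lt (by omega)]
      rw [h6]
      simp only [deltaZPT]
      rw [if_pos (by omega)]; rfl
    · have h3 := h2 i s (by rw [h]; simp)
      rw [h1, h3, val_neg_one']
      simp [deltaZPT]

lemma src_unique (hb : 2 ≤ b) (k z : ZMod (b + 1)) (X : Fin m → ZMod (b + 1)) {e : ZEv m}
    (he : e ≠ .k) (i : ZIdx m) (s s' : ZSt b φ i) (h : (UZ b φ i).delta s e ≠ none)
    (h' : (UZ b φ i).delta s' e ≠ none) : pot φ k z X i s = pot φ k z X i s' := by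
  rcases i with _ | j | j | i
  · change (H3 b m).delta s e ≠ none at h
    change (H3 b m).delta s' e ≠ none at h'
    change potC k z s = potC k z s'
    rcases s with q | q <;> rcases s' with q' | q' <;> cases e <;> simp_all [H3, potC]
  · change (Fgad b j).delta s e ≠ none at h
    change (Fgad b j).delta s' e ≠ none at h'
    change potC k (X j) s = potC k (X j) s'
    rcases s with q | q <;> rcases s' with q' | q' <;> cases e <;> simp_all [Fgad, potC]
  · have h1 := G_src.mp h
    have h2 := G_src.mp h'
    simp only [pot]
    congr 1
    have aux : ∀ q, q < b + 1 → evG b j q = e → q = b := by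
      intro q hq hh
      by_contra hne
      rw [evG, if_pos (by omega)] at hh
      exact he hh.symm
    rw [aux _ h1.1 h1.2, aux _ h2.1 h2.2]
  · have h1 := T_src.mp h
    have h2 := T_src.mp h'
    simp only [pot]
    congr 1
    have a1 := φ.mono01 i
    have a2 := φ.mono12 i
    have a3 := a1.trans a2
    have key : ∀ q q', evT b φ i q = e → evT b φ i q' = e → q = q' := by
      intro q q' hq hq'
      rcases T_cases b q with h | h | h | h | h | ⟨r, h⟩ <;>
      rcases T_cases b q' with h' | h' | h' | h' | h' | ⟨r', h'⟩ <;>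
      (first | subst h | skip) <;> (first | subst h' | skip) <;>
      simp only [evT_lt, evT_0, evT_1, evT_2, evT_3, evT_4, h, h'] at hq hq' <;>
      (first | rfl | exact absurd hq.symm he | exact absurd hq'.symm he | skip) <;>
      have hh := hq.trans hq'.symm <;>
      simp [a1.ne, a2.ne, a3.ne, a1.ne', a2.ne', a3.ne'] at hh
    exact key _ _ h1.2 h2.2

/-- Main tool for the ESSAs of events different from `k`. -/
lemma essp_main {τ : NetType} (hg : Good_s13 b τ) (hb : 2 ≤ b) {e : ZEv m} (he : e ≠ .k)
    (i : ZIdx m) (s : ZSt b φ i) (k z : ZMod (b + 1)) (X : Fin m → ZMod (b + 1))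
    (h1 : shf k z X e = 1)
    (h2 : ∀ t, (UZ b φ i).delta t e ≠ none → pot φ k z X i s ≠ pot φ k z X i t) :
    ∃ sup sig, UnionRegion τ (UZ b φ) sup sig ∧ τ.delta (sup ⟨i, s⟩) (sig e) = none := by
  classical
  have hn : (0 : ZMod (b + 1)) ≠ -1 := by
    intro h
    have := congrArg ZMod.val h
    rw [val_neg_one', ZMod.val_zero] at this
    omega
  have hex : ∀ i' : ZIdx m, ∃ c : ZMod (b + 1),
      (∀ t, (UZ b φ i').delta t e ≠ none → c + pot φ k z X i' t = -1) ∧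
      (∀ t : ZSt b φ i', (⟨i', t⟩ : Σ i, ZSt b φ i) = ⟨i, s⟩ →
        c + pot φ k z X i' t ≠ -1) := by
    intro i'
    by_cases hi : i' = i
    · subst hi
      by_cases hs : ∃ t, (UZ b φ i').delta t e ≠ none
      · obtain ⟨t, ht⟩ := hs
        refine ⟨-1 - pot φ k z X i' t, fun t' ht' => ?_, fun t' ht' => ?_⟩
        · rw [src_unique φ hb k z X he i' t t' ht ht']; ring
        · simp only [Sigma.mk.injEq, heq_eq_eq, true_and] at ht'
          subst ht'
          intro h
          apply h2 t ht
          linear_combination h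
      · refine ⟨- pot φ k z X i' s, fun t' ht' => (hs ⟨t', ht'⟩).elim, fun t' ht' => ?_⟩
        simp only [Sigma.mk.injEq, heq_eq_eq, true_and] at ht'
        subst ht'
        simpa using hn
    · by_cases hs : ∃ t, (UZ b φ i').delta t e ≠ none
      · obtain ⟨t, ht⟩ := hs
        refine ⟨-1 - pot φ k z X i' t, fun t' ht' => ?_, fun t' ht' => ?_⟩
        · rw [src_unique φ hb k z X he i' t t' ht ht']; ring
        · exact (hi (congrArg Sigma.fst ht')).elim
      · exact ⟨0, fun t' ht' => (hs ⟨t', ht'⟩).elim,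
          fun t' ht' => (hi (congrArg Sigma.fst ht')).elim⟩
  choose o ho1 ho2 using hex
  refine ⟨_, fun e' => if e' = e then .pair b 0 else .num (shf k z X e').val,
    region_gen φ hg hb k z X o _ fun e' => ?_, ?_⟩
  · by_cases hee : e' = e
    · subst hee
      right; right
      exact ⟨by simp, h1, ho1⟩
    · left; simp [hee]
  · have h3 := ho2 i s rfl
    have h4 : (o i + pot φ k z X i s).val ≠ b := fun h => h3 (val_eq_b.mp h)
    have h5 := val_le (o i + pot φ k z X i s)
    rw [hg.dl]
    simp only [if_true, deltaZPT]
    rw [if_neg (by omega)]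

lemma ssp_main {τ : NetType} (hg : Good_s13 b τ) (hb : 2 ≤ b)
    (i : ZIdx m) (s s' : ZSt b φ i) (k z : ZMod (b + 1)) (X : Fin m → ZMod (b + 1))
    (h : pot φ k z X i s ≠ pot φ k z X i s') :
    ∃ sup sig, UnionRegion τ (UZ b φ) sup sig ∧ sup ⟨i, s⟩ ≠ sup ⟨i, s'⟩ := by
  refine ⟨_, fun e => .num (shf k z X e).val,
    region_gen φ hg hb k z X (fun _ => 0) _ fun e' => Or.inl rfl, ?_⟩
  simp only [zero_add]
  exact fun heq => h (ZMod.val_injective _ heq)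

/-- Main tool for the ESSAs of `k`. -/
lemma essk_main {τ : NetType} (hg : Good_s13 b τ) (hb : 2 ≤ b)
    (i : ZIdx m) (s : ZSt b φ i) (z : ZMod (b + 1)) (X : Fin m → ZMod (b + 1))
    (h1 : ∀ i s, (UZ b φ i).delta s .k ≠ none → pot φ 1 z X i s ≠ -1)
    (h2 : pot φ 1 z X i s = -1) :
    ∃ sup sig, UnionRegion τ (UZ b φ) sup sig ∧ τ.delta (sup ⟨i, s⟩) (sig .k) = none := by
  refine ⟨_, fun e' => if e' = .k then .pair 0 1 else .num (shf 1 z X e').val,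
    region_gen φ hg hb 1 z X (fun _ => 0) _ fun e' => ?_, ?_⟩
  · by_cases hee : e' = .k
    · subst hee
      right; left
      exact ⟨by simp, rfl, by simpa using h1⟩
    · left; simp [hee]
  · rw [hg.dl]
    simp only [if_true, deltaZPT, zero_add, h2, val_neg_one']
    simp

lemma cast_b : ((b : ℕ) : ZMod (b + 1)) = -1 := by
  have : ((b + 1 : ℕ) : ZMod (b + 1)) = 0 := ZMod.natCast_self _
  push_cast at this
  linear_combination this

lemma cast_inj {q q' : ℕ} (h : q ≤ b) (h' : q' ≤ b)
    (he : (q : ZMod (b + 1)) = (q' : ZMod (b + 1))) : q = q' := by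
  rw [ZMod.natCast_eq_natCast_iff', Nat.mod_eq_of_lt (by omega), Nat.mod_eq_of_lt (by omega)] at he
  exact he

lemma cast_ne {q : ℕ} (h : q < b) : (q : ZMod (b + 1)) ≠ -1 := by
  rw [← cast_b]
  intro h'
  have := cast_inj h.le le_rfl h'
  omega

lemma one_ne (hb : 2 ≤ b) : (1 : ZMod (b + 1)) ≠ 0 := by
  have : Fact (1 < b + 1) := ⟨by omega⟩
  exact one_ne_zero

lemma k_src (z : ZMod (b + 1)) (X : Fin m → ZMod (b + 1))
    (hz : z = 0 ∨ z = 1) (hX : ∀ j, X j = 0 ∨ X j = 1)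
    (hs : ∀ i, X (φ.cl i 0) + X (φ.cl i 1) + X (φ.cl i 2) + z = 1)
    (i : ZIdx m) (s : ZSt b φ i) (h : (UZ b φ i).delta s .k ≠ none) :
    pot φ 1 z X i s ≠ -1 := by
  have hC : ∀ (y : ZMod (b + 1)) (q : ℕ), (y = 0 ∨ y = 1) → q + 1 < b →
      1 - y + (q : ZMod (b + 1)) * 1 ≠ -1 := by
    rintro y q (rfl | rfl) hq
    · have := cast_ne hq
      push_cast at this
      intro h
      apply this
      linear_combination h
    · have := cast_ne (show q < b by omega)
      intro h
      apply this
      linear_combination h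
  rcases i with _ | j | j | i
  · change (H3 b m).delta s .k ≠ none at h
    change potC 1 z s ≠ -1
    rcases s with q | q
    · have hq : (q : ℕ) < b := by
        by_contra hq
        simp [H3, hq] at h
      simpa [potC] using cast_ne hq
    · have hq : (q : ℕ) + 1 < b := by
        by_contra hq
        simp [H3, hq] at h
      exact hC z q hz hq
  · change (Fgad b j).delta s .k ≠ none at h
    change potC 1 (X j) s ≠ -1
    rcases s with q | q
    · have hq : (q : ℕ) < b := by
        by_contra hq
        simp [Fgad, hq] at h
      simpa [potC] using cast_ne hq
    · have hq : (q : ℕ) + 1 < b := by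
        by_contra hq
        simp [Fgad, hq] at h
      exact hC (X j) q (hX j) hq
  · obtain ⟨h1, h2⟩ := G_src.mp h
    simp only [pot]
    have hq : posG s < b := by
      by_contra hq
      simp [evG, hq] at h2
    simpa [potG, hq.le] using cast_ne hq
  · obtain ⟨h1, h2⟩ := T_src.mp h
    simp only [pot]
    generalize posT s = q at h1 h2
    rcases T_cases b q with h | rfl | rfl | rfl | rfl | ⟨r, rfl⟩
    · rw [potT_le _ _ _ _ _ h.le]
      simpa using cast_ne h
    · simp [evT_0] at h2
    · simp [evT_1] at h2
    · simp [evT_2] at h2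
    · simp [evT_3] at h2
    · rw [potT_4, cast_b]
      have := cast_ne (show r < b by omega)
      intro h
      apply this
      linear_combination h - hs i

lemma model_sum {M : Set (Fin m)} (hM : OneInThreeModel φ M) : ∃ X : Fin m → ZMod (b + 1),
    (∀ j, X j = 0 ∨ X j = 1) ∧
    (∀ i, X (φ.cl i 0) + X (φ.cl i 1) + X (φ.cl i 2) + 0 = 1) := by
  classical
  refine ⟨fun j => if j ∈ M then 1 else 0, fun j => ?_, fun i => ?_⟩
  · by_cases h : j ∈ M <;> simp [h]
  · obtain ⟨j, hj, hu⟩ := hM i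
    have h0 := hu 0
    have h1 := hu 1
    have h2 := hu 2
    simp only at hj h0 h1 h2
    by_cases c0 : φ.cl i 0 ∈ M <;> by_cases c1 : φ.cl i 1 ∈ M <;> by_cases c2 : φ.cl i 2 ∈ M <;>
      simp only [c0, c1, c2, forall_true_left] at h0 h1 h2 <;> simp [c0, c1, c2]
    all_goals first | (exfalso; subst h0; simp at h1; done) |
      (exfalso; subst h0; simp at h2; done) | (exfalso; subst h1; simp at h2) |
      (exfalso; fin_cases j <;> simp_all)

lemma essk {τ : NetType} (hg : Good_s13 b τ) (hb : 2 ≤ b) {M : Set (Fin m)}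
    (hM : OneInThreeModel φ M) (i : ZIdx m) (s : ZSt b φ i)
    (h : (UZ b φ i).delta s .k = none) :
    ∃ sup sig, UnionRegion τ (UZ b φ) sup sig ∧ τ.delta (sup ⟨i, s⟩) (sig .k) = none := by
  have hbb : ((b - 1 : ℕ) : ZMod (b + 1)) = -2 := by
    rw [Nat.cast_sub (by omega), cast_b]; push_cast; ring
  have A := k_src φ (1 : ZMod (b + 1)) (fun _ => 0) (Or.inr rfl) (fun _ => Or.inl rfl)
    (fun _ => by ring)
  by_cases hA : pot φ 1 1 (fun _ => 0) i s = -1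
  · exact essk_main φ hg hb i s _ _ A hA
  · obtain ⟨X, hX, hXs⟩ := model_sum (b := b) φ hM
    refine essk_main φ hg hb i s 0 X (k_src φ 0 X (Or.inl rfl) hX hXs) ?_
    rcases i with _ | j | j | i
    · change (H3 b m).delta s .k = none at h
      change potC 1 0 s = -1
      change potC 1 1 s ≠ -1 at hA
      rcases s with q | q
      · have hq : (q : ℕ) = b := by
          by_contra hq
          have : (q : ℕ) < b := by omega
          simp [H3, this] at h
        simp [potC, hq, cast_b]
      · have hq : (q : ℕ) = b - 1 := by
          by_contra hq
          have : (q : ℕ) + 1 < b := by omega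
          simp [H3, this] at h
        simp only [potC, hq, hbb]; ring
    · exfalso
      change (Fgad b j).delta s .k = none at h
      change potC 1 0 s ≠ -1 at hA
      rcases s with q | q
      · have hq : (q : ℕ) = b := by
          by_contra hq
          have : (q : ℕ) < b := by omega
          simp [Fgad, this] at h
        simp [potC, hq, cast_b] at hA
      · have hq : (q : ℕ) = b - 1 := by
          by_contra hq
          have : (q : ℕ) + 1 < b := by omega
          simp [Fgad, this] at h
        apply hA
        simp only [potC, hq, hbb]; ring
    · exfalso
      apply hA
      simp only [pot]
      have hq : ¬ posG s < b := by
        intro hq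
        exact G_src.mpr ⟨by omega, by simp [evG, hq]⟩ h
      unfold potG
      split_ifs with h1
      · rw [show posG s = b by omega, cast_b]; ring
      · rw [cast_b]; ring
    · exfalso
      apply hA
      simp only [pot]
      have h0 : ¬ (posT s < 2 * b + 4 ∧ evT b φ i (posT s) = .k) := fun h' => T_src.mpr h' h
      have h1 := T_le s
      generalize posT s = q at h0 h1
      rcases T_cases b q with h | rfl | rfl | rfl | rfl | ⟨r, rfl⟩
      · exact (h0 ⟨by omega, evT_lt φ i h⟩).elim
      · rw [potT_le _ _ _ _ _ le_rfl, cast_b]; ring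
      · rw [potT_1, cast_b]; ring
      · rw [potT_2, cast_b]; ring
      · rw [potT_3, cast_b]; ring
      · have hr : r = b := by
          by_contra hr
          exact h0 ⟨by omega, evT_4 φ i r⟩
        rw [potT_4, hr, cast_b]; ring

/-- Effect vector concentrated on one variable. -/
def sgl (j : Fin m) : Fin m → ZMod (b + 1) := fun j' => if j' = j then 1 else 0

lemma sgl_self (j : Fin m) : sgl (b := b) j j = 1 := by simp [sgl]
lemma sgl_ne {j j' : Fin m} (h : j' ≠ j) : sgl (b := b) j j' = 0 := by simp [sgl, h]

/-- Separation inside `H₃`/`F_j`, for the event leaving the initial state. -/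
lemma C_first (hb : 2 ≤ b) (s : (Fin (b + 1)) ⊕ (Fin b)) (hs : s ≠ Sum.inl 0) :
    potC (1 : ZMod (b + 1)) 0 s ≠ 0 ∨ potC (0 : ZMod (b + 1)) (-1) s ≠ 0 := by
  rcases s with q | q
  · left
    intro h
    simp only [potC, mul_one] at h
    have := cast_inj (b := b) (q := (q : ℕ)) (q' := 0) (by omega) (by omega) (by simpa using h)
    apply hs
    congr 1
    exact Fin.ext this
  · right
    simpa [potC] using one_ne hb

/-- Separation inside `H₃`/`F_j`, for the event leaving the last lower state. -/
lemma C_last (hb : 2 ≤ b) (s t : (Fin (b + 1)) ⊕ (Fin b))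
    (ht : ∃ q : Fin b, (q : ℕ) = b - 1 ∧ t = Sum.inr q) (hs : s ≠ t) :
    potC (1 : ZMod (b + 1)) 1 s ≠ potC 1 1 t ∨ potC (0 : ZMod (b + 1)) 1 s ≠ potC 0 1 t := by
  obtain ⟨q, hq, rfl⟩ := ht
  rcases s with p | p
  · right
    simpa [potC] using (one_ne hb)
  · left
    intro h
    simp only [potC, mul_one, sub_self, zero_add] at h
    have := cast_inj (by omega) (by omega) h
    apply hs
    congr 1
    exact Fin.ext this

/-- Every pair of distinct states in `H₃`/`F_j` is separated. -/
lemma C_sep (hb : 2 ≤ b) (s t : (Fin (b + 1)) ⊕ (Fin b)) (hs : s ≠ t) :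
    potC (1 : ZMod (b + 1)) 0 s ≠ potC 1 0 t ∨ potC (0 : ZMod (b + 1)) 1 s ≠ potC 0 1 t := by
  rcases s with p | p <;> rcases t with q | q
  · left
    intro h
    simp only [potC, mul_one] at h
    have := cast_inj (by omega) (by omega) h
    exact hs (congrArg _ (Fin.ext this))
  · right
    simpa [potC] using (one_ne hb)
  · right
    simpa [potC] using (one_ne hb)
  · left
    intro h
    simp only [potC, mul_one, add_right_inj] at h
    have := cast_inj (by omega) (by omega) h
    exact hs (congrArg _ (Fin.ext this))

lemma G_ev_no {j : Fin m} {t : ZSt b φ (.G j)} {e : ZEv m} (he : e ≠ .k) (he' : e ≠ .X j) :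
    ¬ (UZ b φ (.G j)).delta t e ≠ none := by
  rw [G_src]
  rintro ⟨-, h⟩
  unfold evG at h
  split_ifs at h
  · exact he h.symm
  · exact he' h.symm

lemma T_ev_cases {i : Fin m} {q : ℕ} {e : ZEv m} (he : e ≠ .k) (h : evT b φ i q = e) :
    (q = b ∧ e = .X (φ.cl i 0)) ∨ (q = b + 1 ∧ e = .X (φ.cl i 1)) ∨
    (q = b + 2 ∧ e = .X (φ.cl i 2)) ∨ (q = b + 3 ∧ e = .zz) := by
  rcases T_cases b q with h' | rfl | rfl | rfl | rfl | ⟨r, rfl⟩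
  · rw [evT_lt φ i h'] at h; exact absurd h.symm he
  · rw [evT_0] at h; simp [h]
  · rw [evT_1] at h; simp [h]
  · rw [evT_2] at h; simp [h]
  · rw [evT_3] at h; simp [h]
  · rw [evT_4] at h; exact absurd h.symm he

lemma ess_u {τ : NetType} (hg : Good_s13 b τ) (hb : 2 ≤ b) (i : ZIdx m) (s : ZSt b φ i)
    (h : (UZ b φ i).delta s .u = none) :
    ∃ sup sig, UnionRegion τ (UZ b φ) sup sig ∧ τ.delta (sup ⟨i, s⟩) (sig .u) = none := by
  rcases i with _ | j | j | i
  · have hs : ¬ (s : (Fin (b + 1)) ⊕ (Fin b)) = Sum.inl 0 := by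
      rintro rfl
      change (H3 b m).delta (Sum.inl 0) .u = none at h
      have : 0 < b := by omega
      simp [H3, this] at h
    have ht : ∀ t : (Fin (b + 1)) ⊕ (Fin b), (H3 b m).delta t .u ≠ none → t = Sum.inl 0 := by
      rintro (q | q) h
      · congr 1
        apply Fin.ext
        by_contra hq
        have hq' : ¬ ((q : ℕ) = 0) := hq
        apply h
        simp only [H3, hq', false_and, dite_false]
      · simp [H3] at h
    rcases C_first hb s hs with hc | hc
    · refine essp_main φ hg hb (by simp) .H s 1 0 (fun _ => 0) (by simp [shf]) fun t h => ?_
      rw [ht t h]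
      simpa [pot, potC] using hc
    · refine essp_main φ hg hb (by simp) .H s 0 (-1) (fun _ => 0) (by simp [shf]) fun t h => ?_
      rw [ht t h]
      simpa [pot, potC] using hc
  · refine essp_main φ hg hb (by simp) _ s 1 0 (fun _ => 0) (by simp [shf]) fun t h => ?_
    change (Fgad b j).delta t .u ≠ none at h
    rcases t with q | q <;> simp [Fgad] at h
  · refine essp_main φ hg hb (by simp) _ s 1 0 (fun _ => 0) (by simp [shf]) fun t h => ?_
    exact absurd h (G_ev_no φ (by simp) (by simp))
  · refine essp_main φ hg hb (by simp) _ s 1 0 (fun _ => 0) (by simp [shf]) fun t h => ?_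
    have := T_ev_cases φ (by simp) (T_src.mp h).2
    simp at this

lemma ess_v {τ : NetType} (hg : Good_s13 b τ) (hb : 2 ≤ b) (v : Fin m) (i : ZIdx m) (s : ZSt b φ i)
    (h : (UZ b φ i).delta s (.v v) = none) :
    ∃ sup sig, UnionRegion τ (UZ b φ) sup sig ∧ τ.delta (sup ⟨i, s⟩) (sig (.v v)) = none := by
  rcases i with _ | j | j | i
  · refine essp_main φ hg hb (by simp) _ s 1 0 (fun _ => 0) (by simp [shf]) fun t h => ?_
    change (H3 b m).delta t (.v v) ≠ none at h
    rcases t with q | q <;> simp [H3] at h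
  · by_cases hj : j = v
    swap
    · refine essp_main φ hg hb (by simp) _ s 1 0 (fun _ => 0) (by simp [shf]) fun t h => ?_
      change (Fgad b j).delta t (.v v) ≠ none at h
      rcases t with q | q <;> simp [Fgad, hj] at h
    subst hj
    have hs : ¬ (s : (Fin (b + 1)) ⊕ (Fin b)) = Sum.inl 0 := by
      rintro rfl
      change (Fgad b j).delta (Sum.inl 0) (.v j) = none at h
      have : 0 < b := by omega
      simp [Fgad, this] at h
    have ht : ∀ t : (Fin (b + 1)) ⊕ (Fin b), (Fgad b j).delta t (.v j) ≠ none →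
        t = Sum.inl 0 := by
      rintro (q | q) h
      · congr 1
        apply Fin.ext
        by_contra hq
        have hq' : ¬ ((q : ℕ) = 0) := hq
        apply h
        simp only [Fgad, hq', false_and, dite_false]
      · simp [Fgad] at h
    rcases C_first hb s hs with hc | hc
    · refine essp_main φ hg hb (by simp) (.F j) s 1 0 (fun _ => 0) (by simp [shf]) fun t h => ?_
      rw [ht t h]
      simpa [pot, potC] using hc
    · refine essp_main φ hg hb (by simp) (.F j) s 0 0 (fun _ => -1) (by simp [shf]) fun t h => ?_
      rw [ht t h]
      simpa [pot, potC] using hc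
  · refine essp_main φ hg hb (by simp) _ s 1 0 (fun _ => 0) (by simp [shf]) fun t h => ?_
    exact absurd h (G_ev_no φ (by simp) (by simp))
  · refine essp_main φ hg hb (by simp) _ s 1 0 (fun _ => 0) (by simp [shf]) fun t h => ?_
    have := T_ev_cases φ (by simp) (T_src.mp h).2
    simp at this

lemma ess_z {τ : NetType} (hg : Good_s13 b τ) (hb : 2 ≤ b) (i : ZIdx m) (s : ZSt b φ i)
    (h : (UZ b φ i).delta s .zz = none) :
    ∃ sup sig, UnionRegion τ (UZ b φ) sup sig ∧ τ.delta (sup ⟨i, s⟩) (sig .zz) = none := by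
  rcases i with _ | j | j | i
  · change (H3 b m).delta s .zz = none at h
    have ht : ∀ t : (Fin (b + 1)) ⊕ (Fin b), (H3 b m).delta t .zz ≠ none →
        t = Sum.inr ⟨b - 1, by omega⟩ := by
      rintro (q | q) h
      · simp [H3] at h
      · congr 1
        apply Fin.ext
        by_contra hq
        have hq' : ¬ ((q : ℕ) = b - 1) := hq
        apply h
        simp only [H3, hq', if_false]
    have hs : ¬ (s : (Fin (b + 1)) ⊕ (Fin b)) = Sum.inr ⟨b - 1, by omega⟩ := by
      rintro rfl
      simp [H3] at h
    rcases C_last hb s (Sum.inr ⟨b - 1, by omega⟩) ⟨_, rfl, rfl⟩ hs with hc | hc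
    · refine essp_main φ hg hb (by simp) .H s 1 1 (fun _ => 0) (by simp [shf]) fun t h => ?_
      rw [ht t h]
      exact hc
    · refine essp_main φ hg hb (by simp) .H s 0 1 (fun _ => 0) (by simp [shf]) fun t h => ?_
      rw [ht t h]
      exact hc
  · refine essp_main φ hg hb (by simp) _ s 1 1 (fun _ => 0) (by simp [shf]) fun t h => ?_
    change (Fgad b j).delta t .zz ≠ none at h
    rcases t with q | q <;> simp [Fgad] at h
  · refine essp_main φ hg hb (by simp) _ s 1 1 (fun _ => 0) (by simp [shf]) fun t h => ?_
    exact absurd h (G_ev_no φ (by simp) (by simp))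
  · have a2 := φ.mono12 i
    have a3 := (φ.mono01 i).trans a2
    have h0 : ¬ (posT s < 2 * b + 4 ∧ evT b φ i (posT s) = .zz) := fun h' => T_src.mpr h' h
    have ht : ∀ t : ZSt b φ (.T i), (UZ b φ (.T i)).delta t .zz ≠ none → posT t = b + 3 := by
      intro t h
      have := T_ev_cases φ (by simp) (T_src.mp h).2
      simpa using this
    have h1 := one_ne hb
    refine essp_main φ hg hb (by simp) (.T i) s 0 1 (sgl (φ.cl i 2)) (by simp [shf])
      fun t h => ?_
    simp only [pot, ht t h, sgl_self, sgl_ne a2.ne, sgl_ne a3.ne]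
    generalize posT s = q at h0
    rcases T_cases b q with h | rfl | rfl | rfl | rfl | ⟨r, rfl⟩
    · rw [potT_le _ _ _ _ _ h.le, potT_3]; simpa using h1.symm
    · rw [potT_le _ _ _ _ _ le_rfl, potT_3]; simpa using h1.symm
    · rw [potT_1, potT_3]; simpa using h1.symm
    · rw [potT_2, potT_3]; simpa using h1.symm
    · exact (h0 ⟨by omega, evT_3 φ i⟩).elim
    · rw [potT_4, potT_3]; simpa using h1

lemma ess_X {τ : NetType} (hg : Good_s13 b τ) (hb : 2 ≤ b) (v : Fin m) (i : ZIdx m) (s : ZSt b φ i)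
    (h : (UZ b φ i).delta s (.X v) = none) :
    ∃ sup sig, UnionRegion τ (UZ b φ) sup sig ∧ τ.delta (sup ⟨i, s⟩) (sig (.X v)) = none := by
  have h1 := one_ne hb
  rcases i with _ | j | j | i
  · refine essp_main φ hg hb (by simp) _ s 1 0 (fun _ => 1) (by simp [shf]) fun t h => ?_
    change (H3 b m).delta t (.X v) ≠ none at h
    rcases t with q | q <;> simp [H3] at h
  · by_cases hj : j = v
    swap
    · refine essp_main φ hg hb (by simp) _ s 1 0 (fun _ => 1) (by simp [shf]) fun t h => ?_
      change (Fgad b j).delta t (.X v) ≠ none at h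
      rcases t with q | q <;> simp [Fgad, hj] at h
    subst hj
    change (Fgad b j).delta s (.X j) = none at h
    have ht : ∀ t : (Fin (b + 1)) ⊕ (Fin b), (Fgad b j).delta t (.X j) ≠ none →
        t = Sum.inr ⟨b - 1, by omega⟩ := by
      rintro (q | q) h
      · simp [Fgad] at h
      · congr 1
        apply Fin.ext
        by_contra hq
        have hq' : ¬ ((q : ℕ) = b - 1) := hq
        apply h
        simp only [Fgad, hq', false_and, if_false]
    have hs : ¬ (s : (Fin (b + 1)) ⊕ (Fin b)) = Sum.inr ⟨b - 1, by omega⟩ := by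
      rintro rfl
      simp [Fgad] at h
    rcases C_last hb s (Sum.inr ⟨b - 1, by omega⟩) ⟨_, rfl, rfl⟩ hs with hc | hc
    · refine essp_main φ hg hb (by simp) (.F j) s 1 0 (fun _ => 1) (by simp [shf]) fun t h => ?_
      rw [ht t h]
      exact hc
    · refine essp_main φ hg hb (by simp) (.F j) s 0 0 (fun _ => 1) (by simp [shf]) fun t h => ?_
      rw [ht t h]
      exact hc
  · by_cases hj : j = v
    swap
    · refine essp_main φ hg hb (by simp) _ s 1 0 (fun _ => 1) (by simp [shf]) fun t h => ?_
      refine absurd h (G_ev_no φ (by simp) ?_)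
      simpa using Ne.symm hj
    subst hj
    refine essp_main φ hg hb (by simp) _ s 1 0 (fun _ => 1) (by simp [shf]) fun t ht => ?_
    obtain ⟨ht1, ht2⟩ := G_src.mp ht
    have hq : posG t = b := by
      by_contra hq
      rw [evG, if_pos (by omega)] at ht2
      simp at ht2
    have hs : posG s ≠ b := fun hs => G_src.mpr ⟨by omega, by simp [hs, evG]⟩ h
    simp only [pot, hq]
    unfold potG
    rw [if_pos le_rfl]
    split_ifs with h2
    · have := cast_ne (show posG s < b by omega)
      rw [cast_b]
      simpa using this
    · intro hh
      apply h1
      linear_combination hh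
  · have a1 := φ.mono01 i
    have a2 := φ.mono12 i
    have a3 := a1.trans a2
    have h0 : ¬ (posT s < 2 * b + 4 ∧ evT b φ i (posT s) = .X v) := fun h' => T_src.mpr h' h
    by_cases c0 : v = φ.cl i 0
    · have ht : ∀ t : ZSt b φ (.T i), (UZ b φ (.T i)).delta t (.X v) ≠ none → posT t = b := by
        intro t h
        have := T_ev_cases φ (by simp) (T_src.mp h).2
        simpa [c0, a1.ne, a3.ne] using this
      by_cases hq : posT s < b
      · refine essp_main φ hg hb (by simp) (.T i) s 1 0 (fun _ => 1) (by simp [shf])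
          fun t h => ?_
        simp only [pot, ht t h]
        rw [potT_le _ _ _ _ _ le_rfl, potT_le _ _ _ _ _ hq.le, cast_b]
        simpa using cast_ne hq
      · refine essp_main φ hg hb (by simp) (.T i) s 0 0 (sgl v) (by simp [shf, sgl_self])
          fun t h => ?_
        simp only [pot, ht t h, c0, sgl_self, sgl_ne a1.ne', sgl_ne a3.ne']
        generalize posT s = q at h0 hq
        rcases T_cases b q with h | rfl | rfl | rfl | rfl | ⟨r, rfl⟩
        · exact (hq h).elim
        · exact (h0 ⟨by omega, by rw [evT_0, c0]⟩).elim
        · rw [potT_le _ _ _ _ _ le_rfl, potT_1]; simpa using h1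
        · rw [potT_le _ _ _ _ _ le_rfl, potT_2]; simpa using h1
        · rw [potT_le _ _ _ _ _ le_rfl, potT_3]; simpa using h1
        · rw [potT_le _ _ _ _ _ le_rfl, potT_4]; simpa using h1
    by_cases c1 : v = φ.cl i 1
    · have ht : ∀ t : ZSt b φ (.T i), (UZ b φ (.T i)).delta t (.X v) ≠ none →
          posT t = b + 1 := by
        intro t h
        have := T_ev_cases φ (by simp) (T_src.mp h).2
        simpa [c1, a1.ne', a2.ne] using this
      by_cases hq : posT s < b + 1
      · refine essp_main φ hg hb (by simp) (.T i) s 0 0 (fun _ => 1) (by simp [shf])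
          fun t h => ?_
        simp only [pot, ht t h]
        rw [potT_1, potT_le _ _ _ _ _ (by omega)]
        simpa using h1.symm
      · refine essp_main φ hg hb (by simp) (.T i) s 0 0 (sgl v) (by simp [shf, sgl_self])
          fun t h => ?_
        simp only [pot, ht t h, c1, sgl_self, sgl_ne a1.ne, sgl_ne a2.ne']
        generalize posT s = q at h0 hq
        rcases T_cases b q with h | rfl | rfl | rfl | rfl | ⟨r, rfl⟩
        · omega
        · omega
        · exact (h0 ⟨by omega, by rw [evT_1, c1]⟩).elim
        · rw [potT_1, potT_2]; simpa using h1
        · rw [potT_1, potT_3]; simpa using h1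
        · rw [potT_1, potT_4]; simpa using h1
    by_cases c2 : v = φ.cl i 2
    · have ht : ∀ t : ZSt b φ (.T i), (UZ b φ (.T i)).delta t (.X v) ≠ none →
          posT t = b + 2 := by
        intro t h
        have := T_ev_cases φ (by simp) (T_src.mp h).2
        simpa [c2, a3.ne', a2.ne'] using this
      by_cases hq : posT s < b + 2
      · refine essp_main φ hg hb (by simp) (.T i) s 0 0
          (fun x => if x = φ.cl i 0 then 0 else 1) (by simp [shf, c0])
          fun t h => ?_
        simp only [pot, ht t h, a1.ne', a3.ne', if_true, if_false]
        generalize posT s = q at h0 hq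
        rcases Nat.lt_or_ge b q with hq1 | hq1
        · obtain rfl : q = b + 1 := by omega
          rw [potT_1, potT_2]
          simpa using h1.symm
        · rw [potT_2, potT_le _ _ _ _ _ hq1]
          simpa using h1.symm
      · refine essp_main φ hg hb (by simp) (.T i) s 0 0 (sgl v) (by simp [shf, sgl_self])
          fun t h => ?_
        simp only [pot, ht t h, c2, sgl_self, sgl_ne a3.ne, sgl_ne a2.ne]
        generalize posT s = q at h0 hq
        rcases T_cases b q with h | rfl | rfl | rfl | rfl | ⟨r, rfl⟩
        · omega
        · omega
        · omega
        · exact (h0 ⟨by omega, by rw [evT_2, c2]⟩).elim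
        · rw [potT_2, potT_3]; simpa using h1
        · rw [potT_2, potT_4]; simpa using h1
    refine essp_main φ hg hb (by simp) (.T i) s 1 0 (fun _ => 1) (by simp [shf]) fun t h => ?_
    have := T_ev_cases φ (by simp) (T_src.mp h).2
    simp [c0, c1, c2] at this

/-- State separation inside `T_i`. -/
lemma T_sep {τ : NetType} (hg : Good_s13 b τ) (hb : 2 ≤ b) (i : Fin m) (s s' : ZSt b φ (.T i))
    (h : posT s < posT s') :
    ∃ sup sig, UnionRegion τ (UZ b φ) sup sig ∧ sup ⟨.T i, s⟩ ≠ sup ⟨.T i, s'⟩ := by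
  have h1 := one_ne hb
  have a1 := φ.mono01 i
  have a2 := φ.mono12 i
  have a3 := a1.trans a2
  have hle := T_le s'
  by_cases c : posT s' ≤ b
  · refine ssp_main φ hg hb _ s s' 1 0 (fun _ => 0) ?_
    simp only [pot]
    rw [potT_le _ _ _ _ _ c, potT_le _ _ _ _ _ (by omega)]
    intro hh
    have := cast_inj (b := b) (q := posT s) (by omega) c (by simpa using hh)
    omega
  by_cases c4 : b + 4 ≤ posT s
  · refine ssp_main φ hg hb _ s s' 1 0 (fun _ => 0) ?_
    simp only [pot]
    obtain ⟨r, hr⟩ : ∃ r, posT s = b + 4 + r := ⟨posT s - (b + 4), by omega⟩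
    obtain ⟨r', hr'⟩ : ∃ r, posT s' = b + 4 + r := ⟨posT s' - (b + 4), by omega⟩
    rw [hr, hr', potT_4, potT_4]
    intro hh
    have := cast_inj (b := b) (q := r) (q' := r') (by omega) (by omega) (by simpa using hh)
    omega
  have hs : posT s ≤ b ∨ posT s = b + 1 ∨ posT s = b + 2 ∨ posT s = b + 3 := by omega
  rcases hs with hs | hs | hs | hs
  · refine ssp_main φ hg hb _ s s' 0 0 (sgl (φ.cl i 0)) ?_
    simp only [pot, sgl_self, sgl_ne a1.ne', sgl_ne a3.ne', potT_le _ _ _ _ _ hs]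
    generalize posT s' = q at *
    rcases T_cases b q with h | rfl | rfl | rfl | rfl | ⟨r, rfl⟩
    · omega
    · omega
    · rw [potT_1]; simpa using h1.symm
    · rw [potT_2]; simpa using h1.symm
    · rw [potT_3]; simpa using h1.symm
    · rw [potT_4]; simpa using h1.symm
  · refine ssp_main φ hg hb _ s s' 0 0 (sgl (φ.cl i 1)) ?_
    simp only [pot, sgl_self, sgl_ne a1.ne, sgl_ne a2.ne', hs, potT_1]
    generalize posT s' = q at *
    rcases T_cases b q with h | rfl | rfl | rfl | rfl | ⟨r, rfl⟩
    · omega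
    · omega
    · omega
    · rw [potT_2]; simpa using h1.symm
    · rw [potT_3]; simpa using h1.symm
    · rw [potT_4]; simpa using h1.symm
  · refine ssp_main φ hg hb _ s s' 0 0 (sgl (φ.cl i 2)) ?_
    simp only [pot, sgl_self, sgl_ne a3.ne, sgl_ne a2.ne, hs, potT_2]
    generalize posT s' = q at *
    rcases T_cases b q with h | rfl | rfl | rfl | rfl | ⟨r, rfl⟩
    · omega
    · omega
    · omega
    · omega
    · rw [potT_3]; simpa using h1.symm
    · rw [potT_4]; simpa using h1.symm
  · refine ssp_main φ hg hb _ s s' 0 1 (fun _ => 0) ?_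
    obtain ⟨r', hr'⟩ : ∃ r, posT s' = b + 4 + r := ⟨posT s' - (b + 4), by omega⟩
    simp only [pot, hs, hr', potT_3, potT_4]
    simpa using h1.symm

/-- State separation inside `G_j`. -/
lemma G_sep {τ : NetType} (hg : Good_s13 b τ) (hb : 2 ≤ b) (j : Fin m) (s s' : ZSt b φ (.G j))
    (h : posG s < posG s') :
    ∃ sup sig, UnionRegion τ (UZ b φ) sup sig ∧ sup ⟨.G j, s⟩ ≠ sup ⟨.G j, s'⟩ := by
  have h1 := one_ne hb
  have hle := G_le s'
  by_cases c : posG s' ≤ b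
  · refine ssp_main φ hg hb _ s s' 1 0 (fun _ => 0) ?_
    simp only [pot]
    unfold potG
    rw [if_pos c, if_pos (by omega)]
    intro hh
    have := cast_inj (b := b) (q := posG s) (by omega) c (by simpa using hh)
    omega
  · refine ssp_main φ hg hb _ s s' 0 0 (fun _ => 1) ?_
    simp only [pot]
    unfold potG
    rw [if_neg c, if_pos (by omega)]
    simpa using h1.symm

end Aux

/-- Let `b ≥ 2` and `τ ∈ {τ_ZPT^b, τ_ZPPT^b}`.  If the cubic
monotone one-in-three 3-SAT instance `φ` has a one-in-three model, then the union
`U_Z(φ)` has the `τ`-ESSP and the `τ`-SSP. -/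
theorem stmt13 (b : ℕ) (hb : 2 ≤ b) (τ : NetType) (hτ : τ = tauZPT b ∨ τ = tauZPPT b)
    {m : ℕ} (φ : CMSat m) (M : Set (Fin m)) (hM : OneInThreeModel φ M) :
    UnionHasESSP τ (UZ b φ) ∧ UnionHasSSP τ (UZ b φ) := by
  have hg := good_of hb hτ
  constructor
  · intro e i s h
    cases e with
    | k => exact essk φ hg hb hM i s h
    | u => exact ess_u φ hg hb i s h
    | zz => exact ess_z φ hg hb i s h
    | v j => exact ess_v φ hg hb j i s h
    | X j => exact ess_X φ hg hb j i s h
  · intro i s s' h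
    rcases i with _ | j | j | i
    · rcases C_sep hb s s' h with hc | hc
      · exact ssp_main φ hg hb .H s s' 1 0 (fun _ => 0) hc
      · exact ssp_main φ hg hb .H s s' 0 1 (fun _ => 0) hc
    · rcases C_sep hb s s' h with hc | hc
      · exact ssp_main φ hg hb (.F j) s s' 1 0 (fun _ => 0) hc
      · exact ssp_main φ hg hb (.F j) s s' 0 0 (fun _ => 1) hc
    · rcases lt_trichotomy (posG s) (posG s') with hlt | heq | hlt
      · exact G_sep φ hg hb j s s' hlt
      · exact absurd (G_inj heq) h
      · obtain ⟨sup, sig, hr, hne⟩ := G_sep φ hg hb j s' s hlt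
        exact ⟨sup, sig, hr, hne.symm⟩
    · rcases lt_trichotomy (posT s) (posT s') with hlt | heq | hlt
      · exact T_sep φ hg hb i s s' hlt
      · exact absurd (T_inj heq) h
      · obtain ⟨sup, sig, hr, hne⟩ := T_sep φ hg hb i s' s hlt
        exact ⟨sup, sig, hr, hne.symm⟩

end PNS
end

section
/- Let b < b' be positive integers and let A be the TS with states s₀,…,s_{b'}, the single event a, initial state s₀ and transitions δ(sᵢ, a) = s_{i+1} for 0 ≤ i ≤ b'−1 and δ(s_{b'}, a) = s₀ (a directed cycle of length b'+1 in which every edge is labeled a). Then A is τ_RZPT^{b'}-solvable but A is not τ_RZPT^b-solvable (the SSA (s₀, s_{b+1}) is solved by no τ_RZPT^b-region). In particular, the class of τ_RZPT^{b'}-solvable TS is not contained in the class of τ_RZPT^b-solvable TS. -/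
namespace PNS

/-- The directed cycle `s₀ −a→ s₁ −a→ … −a→ s_n −a→ s₀` on `n+1` states with the
single event `a` and initial state `s₀`. -/
def cycleTS (n : ℕ) : TS (Fin (n + 1)) Unit where
  init := ⟨0, Nat.succ_pos n⟩
  delta s _ :=
    some (if h : (s : ℕ) < n then ⟨(s : ℕ) + 1, Nat.succ_lt_succ h⟩ else ⟨0, Nat.succ_pos n⟩)

/-- For positive integers `b < b'`, the `a`-labeled cycle `A` on
the states `s₀,…,s_{b'}` is `τ_RZPT^{b'}`-solvable, but no `τ_RZPT^b`-region of `A`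
solves the SSA `(s₀, s_{b+1})`, so `A` is not `τ_RZPT^b`-solvable.  In particular,
the class of `τ_RZPT^{b'}`-solvable TS is not contained in the class of
`τ_RZPT^b`-solvable TS. -/
theorem stmt14 (b b' : ℕ) (hb : 1 ≤ b) (hbb' : b < b') :
    Solvable (tauRZPT b') (cycleTS b') ∧
    (∀ (sup : Fin (b' + 1) → ℕ) (sig : Unit → BEvent),
      IsRegion (tauRZPT b) (cycleTS b') sup sig →
        sup ⟨0, Nat.succ_pos b'⟩ = sup ⟨b + 1, by omega⟩) ∧
    ¬ Solvable (tauRZPT b) (cycleTS b') := by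
  have key : ∀ (sup : Fin (b' + 1) → ℕ) (sig : Unit → BEvent),
      IsRegion (tauRZPT b) (cycleTS b') sup sig →
        sup ⟨0, Nat.succ_pos b'⟩ = sup ⟨b + 1, by omega⟩ := by
    intro sup sig hr
    have step : ∀ s : Fin (b' + 1), deltaRZPT b (sup s) (sig ()) =
        some (sup (if h : (s : ℕ) < b' then ⟨(s : ℕ) + 1, Nat.succ_lt_succ h⟩
          else ⟨0, Nat.succ_pos b'⟩)) := fun s => hr.edge s () _ rfl
    cases hs : sig () with
    | pair m n =>
      have hc : ∀ s, sup s = m := by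
        intro s
        have h := step s
        rw [hs] at h
        simp only [deltaRZPT] at h
        split_ifs at h <;> simp_all
      rw [hc, hc]
    | num z =>
      have hi : ∀ i : ℕ, ∀ hi : i < b' + 1,
          sup ⟨i, hi⟩ = (sup ⟨0, Nat.succ_pos b'⟩ + i * z) % (b + 1) := by
        intro i
        induction i with
        | zero =>
          intro hi
          have h0 : sup ⟨0, Nat.succ_pos b'⟩ ≤ b := hr.sup_mem _
          rw [Nat.zero_mul, Nat.mod_eq_of_lt (by omega)]; rfl
        | succ k ih =>
          intro hi
          have h := step ⟨k, by omega⟩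
          have hk : k < b' := by omega
          simp only [hs, deltaRZPT, hk, dite_true, Option.some.injEq] at h
          rw [← h, ih (by omega), Nat.mod_add_mod, Nat.add_assoc, Nat.succ_mul]
      have h0 : sup ⟨0, Nat.succ_pos b'⟩ ≤ b := hr.sup_mem _
      rw [hi (b + 1) (by omega), Nat.add_mul_mod_self_left, Nat.mod_eq_of_lt (by omega)]
  refine ⟨⟨?_, ?_⟩, key, ?_⟩
  · intro e s h
    simp [cycleTS] at h
  · intro s s' hne
    refine ⟨fun s => s, fun _ => .num 1, ⟨?_, ?_, ?_⟩, fun h => hne (Fin.ext h)⟩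
    · intro s
      exact Nat.lt_succ_iff.mp s.2
    · intro e
      exact Or.inr ⟨1, rfl, by omega⟩
    · intro s e t h
      have h' := Option.some.inj h
      subst h'
      change some (((s : ℕ) + 1) % (b' + 1)) = _
      have := s.2
      split_ifs with hlt
      · rw [Nat.mod_eq_of_lt (by omega)]
      · have : (s : ℕ) = b' := by omega
        simp [this]
  · rintro ⟨-, h⟩
    obtain ⟨sup, sig, hr, hn⟩ := h ⟨0, Nat.succ_pos b'⟩ ⟨b + 1, by omega⟩ (by simp)
    exact hn (key sup sig hr)

end PNS
end

section
/- Let b ∈ ℕ⁺, τ ∈ {τ_ZPT^b, τ_ZPPT^b, τ_RZPT^b}, let A be a TS with event set E = {e₁,…,e_n}, and let A' be a spanning tree of A with chords t₁,…,t_k. A vector abs ∈ ℤ_{b+1}ⁿ is an abstract signature of A if and only if ψ_{tᵢ}·abs = 0 for all i ∈ {1,…,k}. Consequently, for any two spanning trees A' and A'' of A, a vector abs ∈ ℤ_{b+1}ⁿ satisfies all fundamental-cycle equations of A' if and only if it satisfies all fundamental-cycle equations of A''. -/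
namespace PNS

/-- A spanning tree of `A`, represented by the parent function of the tree,
a depth function witnessing well-foundedness, and the Parikh vectors `count s`
of the unique tree paths from the initial state to the states. -/
structure SpanTree {S E : Type} [DecidableEq E] (A : TS S E) : Type where
  parent : S → Option (S × E)
  depth : S → ℕ
  count : S → E → ℕ
  parent_init : parent A.init = none
  parent_ne : ∀ s, s ≠ A.init → ∃ p e, parent s = some (p, e)
  parent_edge : ∀ s p e, parent s = some (p, e) → A.delta p e = some s
  depth_lt : ∀ s p e, parent s = some (p, e) → depth p < depth s
  count_init : ∀ e, count A.init e = 0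
  count_parent : ∀ s p e0 e, parent s = some (p, e0) →
    count s e = count p e + (if e = e0 then 1 else 0)

/-- `abs` is an abstract signature of `A` (w.r.t. the bound `b`): some support
`sup` turns it into an abstract region, i.e. `sup s' = sup s + abs e (mod b+1)`
for every edge `s −e→ s'`. -/
def AbstractSig (b : ℕ) {S E : Type} (A : TS S E) (abs : E → ZMod (b + 1)) : Prop :=
  ∃ sup : S → ZMod (b + 1), ∀ s e s', A.delta s e = some s' → sup s' = sup s + abs e

/-- `s −e→ s'` is a chord of the spanning tree `T`: an edge of `A` that is not a tree edge. -/
def IsChord {S E : Type} [DecidableEq E] {A : TS S E} (T : SpanTree A)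
    (s : S) (e : E) (s' : S) : Prop :=
  A.delta s e = some s' ∧ T.parent s' ≠ some (s, e)

/-- The fundamental cycle `ψ_t` of the chord `t = s −e→ s'`, evaluated at the event `e'`. -/
noncomputable def fundCycle (b : ℕ) {S E : Type} [DecidableEq E] {A : TS S E}
    (T : SpanTree A) (s : S) (e : E) (s' : S) (e' : E) : ZMod (b + 1) :=
  ((T.count s e' : ZMod (b + 1)) - (T.count s' e' : ZMod (b + 1))) +
    (if e' = e then 1 else 0)

/-- Evaluation of a fundamental-cycle equation through the tree potentials. -/
theorem fundCycle_sum (b : ℕ) {S E : Type} [Fintype E] [DecidableEq E] {A : TS S E}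
    (T : SpanTree A) (abs : E → ZMod (b + 1)) (s : S) (e : E) (s' : S) :
    (∑ e' : E, fundCycle b T s e s' e' * abs e') =
      (∑ e' : E, (T.count s e' : ZMod (b + 1)) * abs e')
        - (∑ e' : E, (T.count s' e' : ZMod (b + 1)) * abs e') + abs e := by
  simp [fundCycle, add_mul, sub_mul, Finset.sum_add_distrib, Finset.sum_sub_distrib]

/-- The tree potential grows by `abs e` along a tree edge labelled `e`. -/
theorem potential_parent (b : ℕ) {S E : Type} [Fintype E] [DecidableEq E] {A : TS S E}
    (T : SpanTree A) (abs : E → ZMod (b + 1)) (s : S) (e : E) (s' : S)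
    (h : T.parent s' = some (s, e)) :
    (∑ e' : E, (T.count s' e' : ZMod (b + 1)) * abs e') =
      (∑ e' : E, (T.count s e' : ZMod (b + 1)) * abs e') + abs e := by
  simp [T.count_parent s' s e _ h, add_mul, Finset.sum_add_distrib]

/-- The support of an abstract region is determined by the tree potential. -/
theorem sup_eq_potential (b : ℕ) {S E : Type} [Fintype E] [DecidableEq E] {A : TS S E}
    (T : SpanTree A) (abs : E → ZMod (b + 1)) (sup : S → ZMod (b + 1))
    (hsup : ∀ s e s', A.delta s e = some s' → sup s' = sup s + abs e) :
    ∀ (n : ℕ) (s : S), T.depth s = n →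
      sup s = sup A.init + ∑ e' : E, (T.count s e' : ZMod (b + 1)) * abs e' := by
  intro n
  induction n using Nat.strong_induction_on with
  | _ n ih =>
    intro s hs
    by_cases h : s = A.init
    · subst h
      simp [T.count_init]
    · obtain ⟨p, e, hp⟩ := T.parent_ne s h
      have hd := T.depth_lt s p e hp
      rw [hsup p e s (T.parent_edge s p e hp), ih (T.depth p) (by omega) p rfl,
        potential_parent b T abs p e s hp, add_assoc]

theorem abstractSig_iff (b : ℕ) {S E : Type} [Fintype E] [DecidableEq E] {A : TS S E}
    (T : SpanTree A) (abs : E → ZMod (b + 1)) :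
    AbstractSig b A abs ↔
      ∀ s e s', IsChord T s e s' →
        (∑ e' : E, fundCycle b T s e s' e' * abs e') = 0 := by
  constructor
  · rintro ⟨sup, hsup⟩ s e s' ⟨hed, -⟩
    have h1 := sup_eq_potential b T abs sup hsup _ s rfl
    have h2 := sup_eq_potential b T abs sup hsup _ s' rfl
    have h3 := hsup s e s' hed
    rw [fundCycle_sum]
    rw [h1, h2] at h3
    linear_combination -h3
  · intro h
    refine ⟨fun s => ∑ e' : E, (T.count s e' : ZMod (b + 1)) * abs e', fun s e s' hed => ?_⟩
    by_cases hc : T.parent s' = some (s, e)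
    · exact potential_parent b T abs s e s' hc
    · have h1 := h s e s' ⟨hed, hc⟩
      rw [fundCycle_sum] at h1
      linear_combination -h1

/-- Let `τ ∈ {τ_ZPT^b, τ_ZPPT^b, τ_RZPT^b}` and let `A'` (here `T`)
be a spanning tree of the TS `A`.  A vector `abs ∈ ℤ_{b+1}^E` is an abstract
signature of `A` iff `ψ_t · abs = 0` for every chord `t` of `T`.  Consequently, any
two spanning trees of `A` yield equivalent systems of fundamental-cycle equations. -/
theorem stmt15 (b : ℕ) (hb : 1 ≤ b) (τ : NetType)
    (hτ : τ = tauZPT b ∨ τ = tauZPPT b ∨ τ = tauRZPT b)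
    {S E : Type} [Fintype E] [DecidableEq E] (A : TS S E) (hinit : A.Initialized)
    (T : SpanTree A) :
    (∀ abs : E → ZMod (b + 1),
      AbstractSig b A abs ↔
        ∀ s e s', IsChord T s e s' →
          (∑ e' : E, fundCycle b T s e s' e' * abs e') = 0) ∧
    (∀ (T' : SpanTree A) (abs : E → ZMod (b + 1)),
      (∀ s e s', IsChord T s e s' →
        (∑ e' : E, fundCycle b T s e s' e' * abs e') = 0) ↔
      (∀ s e s', IsChord T' s e s' →
        (∑ e' : E, fundCycle b T' s e s' e' * abs e') = 0)) := by
  exact ⟨fun abs => abstractSig_iff b T abs, fun T' abs =>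
    (abstractSig_iff b T abs).symm.trans (abstractSig_iff b T' abs)⟩

end PNS
end

section
/- Let b ∈ ℕ⁺, τ ∈ {τ_ZPT^b, τ_ZPPT^b, τ_RZPT^b} and let (sup, sig) be a τ-region of a TS A = (S, E, δ, ι). Define abs : E → {0,…,b} by abs(e) = (−m + n) mod (b+1) if sig(e) = (m,n) is a pair event, and abs(e) = sig(e) if sig(e) ∈ {0,…,b}. Then (sup, abs) is an abstract τ-region of A. -/
namespace PNS

/-- The arithmetic core: adding `(n - m) mod (b+1)` to `s` gives `s - m + n`. -/
theorem mod_shift (b s m n : ℕ) (hm : m ≤ b) (hs : m ≤ s) (hsn : s - m + n ≤ b) :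
    (s + (n + (b + 1) - m) % (b + 1)) % (b + 1) = s - m + n := by
  rw [Nat.add_mod_mod]
  have : s + (n + (b + 1) - m) = (s - m + n) + (b + 1) := by omega
  rw [this, Nat.add_mod_right, Nat.mod_eq_of_lt (by omega)]

/-- Let `τ ∈ {τ_ZPT^b, τ_ZPPT^b, τ_RZPT^b}` and let `(sup, sig)` be
a `τ`-region of `A`.  Replacing each signature value `(m,n)` by the group element
`(−m+n) mod (b+1)` (and keeping group-element values) yields an abstract `τ`-region
`(sup, abs)` of `A`. -/
theorem stmt16 (b : ℕ) (hb : 1 ≤ b) (τ : NetType)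
    (hτ : τ = tauZPT b ∨ τ = tauZPPT b ∨ τ = tauRZPT b)
    {S E : Type} (A : TS S E) (hinit : A.Initialized)
    (sup : S → ℕ) (sig : E → BEvent) (h : IsRegion τ A sup sig) :
    IsRegion τ A sup (fun e =>
      BEvent.num (match sig e with
        | BEvent.pair m n => (n + (b + 1) - m) % (b + 1)
        | BEvent.num z => z)) := by
  have key : ∀ e, (match sig e with
        | BEvent.pair m n => (n + (b + 1) - m) % (b + 1)
        | BEvent.num z => z) ≤ b := by
    intro e
    have h1 := h.sig_mem e
    cases he : sig e with
    | pair m n => exact Nat.le_of_lt_succ (Nat.mod_lt _ (Nat.succ_pos b))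
    | num z =>
      rw [he] at h1
      rcases hτ with rfl | rfl | rfl <;>
        simpa [tauZPT, tauZPPT, tauRZPT] using h1
  refine ⟨h.sup_mem, fun e => ?_, fun s e s' hs => ?_⟩
  · rcases hτ with rfl | rfl | rfl <;> exact Or.inr ⟨_, rfl, key e⟩
  · have h1 := h.sig_mem e
    have h2 := h.edge s e s' hs
    cases he : sig e with
    | num z =>
      rw [he] at h2
      exact h2
    | pair m n =>
      rw [he] at h1 h2
      have hm : m ≤ b := by
        rcases hτ with rfl | rfl | rfl <;>
          simp [tauZPT, tauZPPT, tauRZPT] at h1 <;> exact h1.1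
      rcases hτ with rfl | rfl | rfl
      · simp only [tauZPT, deltaZPT, Option.ite_none_right_eq_some, Option.some.injEq] at h2 ⊢
        rw [← h2.2]
        exact mod_shift b _ m n hm h2.1.1 h2.1.2
      · simp only [tauZPPT, deltaZPT, Option.ite_none_right_eq_some, Option.some.injEq] at h2 ⊢
        rw [← h2.2]
        exact mod_shift b _ m n hm h2.1.1 h2.1.2
      · simp only [tauRZPT, deltaRZPT, Option.ite_none_right_eq_some, Option.some.injEq] at h2 ⊢
        obtain ⟨⟨h3, h4⟩, h5⟩ := h2
        have := mod_shift b (sup s) m n hm (by omega) (by omega)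
        omega

end PNS
end

section
/- Let b ∈ ℕ⁺, τ ∈ {τ_ZPT^b, τ_ZPPT^b, τ_RZPT^b}, let A be a TS with event set E = {e₁,…,e_n} and let A' be a spanning tree of A. An SSA (s, s') of A is solved by some τ-region of A if and only if there is an abstract signature abs of A with ψ_s·abs ≠ ψ_{s'}·abs. -/
namespace PNS

/-- The change modulo `b + 1` that an event causes. -/
def diffMod (b : ℕ) : BEvent → ZMod (b + 1)
  | .pair m n => (n : ZMod (b + 1)) - (m : ZMod (b + 1))
  | .num z => (z : ZMod (b + 1))

theorem zpt_diff (b x y : ℕ) (e : BEvent) (h : deltaZPT b x e = some y) :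
    (y : ZMod (b + 1)) = (x : ZMod (b + 1)) + diffMod b e := by
  cases e with
  | pair m n =>
    simp only [deltaZPT] at h
    split_ifs at h with hc
    simp only [Option.some.injEq] at h
    subst h
    simp only [diffMod]
    push_cast [Nat.cast_sub hc.1]
    ring
  | num z =>
    simp only [deltaZPT, Option.some.injEq] at h
    subst h
    simp only [diffMod, ZMod.natCast_mod]
    push_cast
    ring

theorem rzpt_diff (b x y : ℕ) (e : BEvent) (h : deltaRZPT b x e = some y) :
    (y : ZMod (b + 1)) = (x : ZMod (b + 1)) + diffMod b e := by
  cases e with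
  | pair m n =>
    simp only [deltaRZPT] at h
    split_ifs at h with hc
    simp only [Option.some.injEq] at h
    obtain ⟨rfl, -⟩ := hc
    subst h
    simp only [diffMod]
    ring
  | num z =>
    simp only [deltaRZPT, Option.some.injEq] at h
    subst h
    simp only [diffMod, ZMod.natCast_mod]
    push_cast
    ring

/-- The support of an abstract region is determined along the spanning tree. -/
theorem sup_eq (b : ℕ) {S E : Type} [Fintype E] [DecidableEq E] (A : TS S E)
    (T : SpanTree A) (sup : S → ZMod (b + 1)) (abs : E → ZMod (b + 1))
    (h : ∀ s e s', A.delta s e = some s' → sup s' = sup s + abs e) :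
    ∀ (k : ℕ) (t : S), T.depth t = k →
      sup t = sup A.init + ∑ e : E, (T.count t e : ZMod (b + 1)) * abs e := by
  intro k
  induction k using Nat.strong_induction_on with
  | _ k ih =>
    intro t ht
    by_cases hi : t = A.init
    · subst hi
      simp [T.count_init]
    · obtain ⟨p, e0, hp⟩ := T.parent_ne t hi
      have hd := T.depth_lt t p e0 hp
      rw [h p e0 t (T.parent_edge t p e0 hp), ih (T.depth p) (ht ▸ hd) p rfl]
      have hc : ∀ e, (T.count t e : ZMod (b + 1)) * abs e
          = (T.count p e : ZMod (b + 1)) * abs e + (if e = e0 then abs e else 0) := by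
        intro e
        rw [T.count_parent t p e0 e hp]
        split_ifs <;> push_cast <;> ring
      simp only [hc, Finset.sum_add_distrib, Finset.sum_ite_eq', Finset.mem_univ, if_true]
      ring

/-- Let `τ ∈ {τ_ZPT^b, τ_ZPPT^b, τ_RZPT^b}` and let `T` be a
spanning tree of `A`.  An SSA `(s, s')` of `A` is solved by some `τ`-region of `A`
iff there is an abstract signature `abs` of `A` with `ψ_s · abs ≠ ψ_{s'} · abs`. -/
theorem stmt17 (b : ℕ) (hb : 1 ≤ b) (τ : NetType)
    (hτ : τ = tauZPT b ∨ τ = tauZPPT b ∨ τ = tauRZPT b)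
    {S E : Type} [Fintype E] [DecidableEq E] (A : TS S E) (hinit : A.Initialized)
    (T : SpanTree A) (s s' : S) (hss : s ≠ s') :
    (∃ sup sig, IsRegion τ A sup sig ∧ sup s ≠ sup s') ↔
      ∃ abs : E → ZMod (b + 1), AbstractSig b A abs ∧
        (∑ e : E, (T.count s e : ZMod (b + 1)) * abs e) ≠
          ∑ e : E, (T.count s' e : ZMod (b + 1)) * abs e := by
  have hst : ∀ x ∈ τ.states, x ≤ b := by
    rcases hτ with rfl | rfl | rfl <;> exact fun x hx => hx
  have hst' : ∀ x, x ≤ b → x ∈ τ.states := by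
    rcases hτ with rfl | rfl | rfl <;> exact fun x hx => hx
  have hev : ∀ z, z ≤ b → BEvent.num z ∈ τ.events := by
    rcases hτ with rfl | rfl | rfl <;> exact fun z hz => Or.inr ⟨z, rfl, hz⟩
  have hnum : ∀ x z, τ.delta x (BEvent.num z) = some ((x + z) % (b + 1)) := by
    rcases hτ with rfl | rfl | rfl <;> exact fun x z => rfl
  have hdiff : ∀ x y e, τ.delta x e = some y →
      (y : ZMod (b + 1)) = (x : ZMod (b + 1)) + diffMod b e := by
    rcases hτ with rfl | rfl | rfl
    · exact fun x y e h => zpt_diff b x y e h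
    · exact fun x y e h => zpt_diff b x y e h
    · exact fun x y e h => rzpt_diff b x y e h
  constructor
  · rintro ⟨sup, sig, hR, hne⟩
    have hA : ∀ s e s', A.delta s e = some s' →
        (sup s' : ZMod (b + 1)) = (sup s : ZMod (b + 1)) + diffMod b (sig e) :=
      fun s e s' h => hdiff _ _ _ (hR.edge s e s' h)
    refine ⟨fun e => diffMod b (sig e), ⟨fun s => (sup s : ZMod (b + 1)), hA⟩, ?_⟩
    intro heq
    apply hne
    have h1 := sup_eq b A T (fun s => (sup s : ZMod (b + 1))) (fun e => diffMod b (sig e)) hA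
    have h2 : (sup s : ZMod (b + 1)) = (sup s' : ZMod (b + 1)) := by
      have h3 := h1 _ s rfl
      have h4 := h1 _ s' rfl
      simp only at h3 h4 heq
      rw [h3, h4, heq]
    rw [ZMod.natCast_eq_natCast_iff'] at h2
    rwa [Nat.mod_eq_of_lt (Nat.lt_succ_of_le (hst _ (hR.sup_mem s))),
      Nat.mod_eq_of_lt (Nat.lt_succ_of_le (hst _ (hR.sup_mem s')))] at h2
  · rintro ⟨abs, ⟨sup, hA⟩, hne⟩
    refine ⟨fun s => (sup s).val, fun e => BEvent.num (abs e).val, ⟨?_, ?_, ?_⟩, ?_⟩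
    · exact fun s => hst' _ (Nat.lt_succ_iff.mp (ZMod.val_lt _))
    · exact fun e => hev _ (Nat.lt_succ_iff.mp (ZMod.val_lt _))
    · intro s e s' h
      rw [hnum, hA s e s' h, ZMod.val_add]
    · intro heq
      apply hne
      have h2 : sup s = sup s' := ZMod.val_injective _ heq
      rw [sup_eq b A T sup abs hA _ s rfl, sup_eq b A T sup abs hA _ s' rfl] at h2
      exact add_left_cancel h2

end PNS
end
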